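/- arXiv:1908.06396 — 2 statements merged into one kernel-verified Lean document; each statement's English description precedes it below -/
import Mathlib

section
/- Let Ω ⊂ ℝⁿ (n ≥ 2) be a bounded open convex domain which is an (a,η) type domain with a > 2 and η > 0. Suppose F : Ω × (−∞,0) → ℝ is continuous and non-decreasing in its second argument, and there are constants A > 0, α ≥ 0, β ≥ n+1 such that 0 < F(x,t) ≤ A·d_x^{β−n−1}·|t|^{−α} for all x ∈ Ω and t < 0. Let γ₂ = (β−n+1)/(n+α) + (2n−2)/(a(n+α)) if β < α + 2n − 1 − (2n−2)/a, and let γ₂ be any number in (0,1) if β ≥ α + 2n − 1 − (2n−2)/a. Then every classical solution u of det D²u = F(x,u) in Ω with u = 0 on ∂Ω is γ₂-Hölder continuous on the closure of Ω. -/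
/-- The determinant of the Hessian matrix of `u` at `x`. -/
noncomputable def hessianDet {n : ℕ} (u : EuclideanSpace ℝ (Fin n) → ℝ)
    (x : EuclideanSpace ℝ (Fin n)) : ℝ :=
  (Matrix.of fun i j : Fin n =>
    iteratedFDeriv ℝ 2 u x ![EuclideanSpace.single i (1 : ℝ), EuclideanSpace.single j (1 : ℝ)]).det

/-- The last coordinate index of `Fin n`. -/
def lastIdx (n : ℕ) (hn : 0 < n) : Fin n := ⟨n - 1, Nat.sub_lt hn one_pos⟩

/-- `u` is a classical solution of `det D²u = F(x,u)` in `Ω`, `u = 0` on `∂Ω`. -/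
def IsClassicalSolution {n : ℕ} (Ω : Set (EuclideanSpace ℝ (Fin n)))
    (F : EuclideanSpace ℝ (Fin n) → ℝ → ℝ) (u : EuclideanSpace ℝ (Fin n) → ℝ) : Prop :=
  ContinuousOn u (closure Ω) ∧ ConvexOn ℝ Ω u ∧ ContDiffOn ℝ 2 u Ω ∧
    (∀ x ∈ Ω, u x < 0) ∧ (∀ x ∈ frontier Ω, u x = 0) ∧
    ∀ x ∈ Ω, hessianDet u x = F x (u x)

/-- `F` is continuous on `Ω × (-∞,0)`, non-decreasing in its second argument, and satisfies
`0 < F(x,t) ≤ A d_x^{β-n-1} |t|^{-α}`. -/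
def SatisfiesFCond {n : ℕ} (Ω : Set (EuclideanSpace ℝ (Fin n)))
    (F : EuclideanSpace ℝ (Fin n) → ℝ → ℝ) (A α β : ℝ) : Prop :=
  ContinuousOn (fun p : EuclideanSpace ℝ (Fin n) × ℝ => F p.1 p.2) (Ω ×ˢ Set.Iio (0 : ℝ)) ∧
    (∀ x ∈ Ω, ∀ s t : ℝ, s ≤ t → t < 0 → F x s ≤ F x t) ∧
    ∀ x ∈ Ω, ∀ t : ℝ, t < 0 →
      0 < F x t ∧ F x t ≤ A * Metric.infDist x (frontier Ω) ^ (β - n - 1) * |t| ^ (-α)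

/-- A boundary point `x₀` of `Ω` is of `(a,η)` type: after a translation and rotation,
`x₀ = 0` and `Ω ⊆ {x : xₙ ≥ η |x'|^a}`. -/
def IsATypePoint {n : ℕ} (hn : 0 < n) (Ω : Set (EuclideanSpace ℝ (Fin n)))
    (a η : ℝ) (x₀ : EuclideanSpace ℝ (Fin n)) : Prop :=
  ∃ f : EuclideanSpace ℝ (Fin n) ≃ₗᵢ[ℝ] EuclideanSpace ℝ (Fin n),
    ∀ y ∈ Ω,
      η * Real.sqrt (∑ j ∈ Finset.univ.erase (lastIdx n hn), f (y - x₀) j ^ 2) ^ a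
        ≤ f (y - x₀) (lastIdx n hn)

/-- `Ω` is an `(a,η)` type domain: every boundary point is of `(a,η)` type. -/
def IsATypeDomain {n : ℕ} (hn : 0 < n) (Ω : Set (EuclideanSpace ℝ (Fin n))) (a η : ℝ) : Prop :=
  ∀ x₀ ∈ frontier Ω, IsATypePoint hn Ω a η x₀

/-!
Fix a boundary point, put it at the origin and let the `x_n`-axis point along the axis of the
`(a, η)` condition. Then `Ω` lies in the cusp `|x'|² ≤ c x_n ^ δ`, `δ = 2 / a`. In this cusp the
function `|x'|² x_n ^ (γ - δ) - M x_n ^ γ` is, for `M` large, negative and convex, and its Hessian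
is at least `x_n ^ (γ - 2)` along the axis and `x_n ^ (γ - δ)` across it. After multiplication by a
large `K`, its Hessian determinant exceeds `A d_x ^ (β - n - 1) |u| ^ (-α)` wherever `u` lies below
it, because `d_x ≤ x_n` and `γ (n + α) ≤ β - n + 1 + (n - 1) δ`. Hence `u` minus this barrier has no
negative interior minimum, so that `-u(z) ≤ C |z - x₀| ^ γ` for every boundary point `x₀`. Convexity
of `u` carries this estimate over to all pairs of points of `closure Ω`.
-/

open Filter Topology Set
open scoped RealInnerProductSpace

section Determinant

open Matrix

section Loewner

open scoped ComplexOrder MatrixOrder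

variable {𝕜 ι : Type*} [RCLike 𝕜] [Fintype ι] [DecidableEq ι]

lemma one_le_det_one_add_of_posSemidef {X : Matrix ι ι 𝕜} (hX : X.PosSemidef) :
    1 ≤ (1 + X).det := by
  have hdet : (1 + X).det = ∏ i, ((1 + hX.1.eigenvalues i : ℝ) : 𝕜) := by
    have hchar := congrArg (Polynomial.eval (-1)) hX.1.charpoly_eq
    have hneg : scalar ι (-1 : 𝕜) - X = -(1 + X) := by
      rw [map_neg, map_one, neg_add, sub_eq_add_neg]
    have hprod : ∏ i, ((1 + hX.1.eigenvalues i : ℝ) : 𝕜) =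
        (-1) ^ Fintype.card ι * ∏ i, (-1 - (hX.1.eigenvalues i : 𝕜)) := by
      rw [← Finset.card_univ, ← Finset.prod_neg]
      exact Finset.prod_congr rfl fun i _ ↦ by push_cast; ring
    simp only [eval_charpoly, hneg, det_neg, Polynomial.eval_prod, Polynomial.eval_sub,
      Polynomial.eval_X, Polynomial.eval_C] at hchar
    rw [hprod, ← hchar, ← mul_assoc, ← mul_pow, neg_one_mul, neg_neg, one_pow, one_mul]
  rw [hdet, ← RCLike.ofReal_prod, ← RCLike.ofReal_one, RCLike.ofReal_le_ofReal]
  exact Finset.one_le_prod fun i _ ↦ le_add_of_nonneg_right (hX.eigenvalues_nonneg i)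

lemma det_le_det_of_posSemidef_sub {A B : Matrix ι ι 𝕜} (hA : A.PosDef)
    (hAB : (B - A).PosSemidef) : A.det ≤ B.det := by
  obtain ⟨C, hC⟩ := CStarAlgebra.nonneg_iff_eq_star_mul_self.mp hAB.nonneg
  have hX : (C * A⁻¹ * Cᴴ).PosSemidef := hA.inv.posSemidef.mul_mul_conjTranspose_same C
  calc A.det = A.det * 1 := (mul_one _).symm
    _ ≤ A.det * (1 + C * A⁻¹ * Cᴴ).det :=
      mul_le_mul_of_nonneg_left (one_le_det_one_add_of_posSemidef hX) hA.det_pos.le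
    _ = (A + Cᴴ * C).det := (det_add_mul _ _ hA.det_pos.ne'.isUnit).symm
    _ = B.det := by rw [← star_eq_conjTranspose, ← hC, add_sub_cancel]

end Loewner

variable {ι : Type*} [Fintype ι] [DecidableEq ι]

lemma det_smul_one_add_smul_vecMulVec {K : Type*} [Field K] {w : ι → K} (hw : w ⬝ᵥ w = 1)
    (a : K) {b : K} (hb : b ≠ 0) :
    (b • 1 + (a - b) • vecMulVec w w : Matrix ι ι K).det = a * b ^ (Fintype.card ι - 1) := by
  have hcard : Fintype.card ι ≠ 0 := fun h ↦ by
    have := Fintype.card_eq_zero_iff.mp h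
    simp [dotProduct] at hw
  have hfactor : (b • 1 + (a - b) • vecMulVec w w : Matrix ι ι K) =
      b • (1 + replicateCol Unit ((a / b - 1) • w) * replicateRow Unit w) := by
    rw [← vecMulVec_eq, smul_vecMulVec, smul_add, smul_smul, mul_sub, mul_div_cancel₀ _ hb,
      mul_one]
  rw [hfactor, det_smul, det_one_add_replicateCol_mul_replicateRow, dotProduct_smul, hw,
    smul_eq_mul, mul_one, add_sub_cancel, ← mul_pow_sub_one hcard, mul_right_comm,
    mul_div_cancel₀ _ hb]

lemma mul_pow_le_det_of_le_dotProduct_mulVec {H : Matrix ι ι ℝ} (hH : H.IsHermitian)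
    {w : ι → ℝ} (hw : w ⬝ᵥ w = 1) {a b : ℝ} (ha : 0 < a) (hb : 0 < b)
    (hle : ∀ v, a * (w ⬝ᵥ v) ^ 2 + b * (v ⬝ᵥ v - (w ⬝ᵥ v) ^ 2) ≤ v ⬝ᵥ H *ᵥ v) :
    a * b ^ (Fintype.card ι - 1) ≤ H.det := by
  set A : Matrix ι ι ℝ := b • 1 + (a - b) • vecMulVec w w with hAdef
  have hquad (v : ι → ℝ) :
      v ⬝ᵥ A *ᵥ v = a * (w ⬝ᵥ v) ^ 2 + b * (v ⬝ᵥ v - (w ⬝ᵥ v) ^ 2) := by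
    simp only [hAdef, add_mulVec, smul_mulVec, one_mulVec, vecMulVec_mulVec, dotProduct_add,
      dotProduct_smul, smul_eq_mul, op_smul_eq_smul, dotProduct_comm v w]
    ring
  have hAsymm : A.IsHermitian := by
    simp [hAdef, IsHermitian, conjTranspose_eq_transpose_of_trivial]
  have hA : A.PosDef := by
    refine .of_dotProduct_mulVec_pos hAsymm fun v hv ↦ ?_
    rw [star_trivial, hquad]
    have hcauchy : (w ⬝ᵥ v) ^ 2 ≤ v ⬝ᵥ v := by
      have := Finset.sum_mul_sq_le_sq_mul_sq Finset.univ w v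
      simp only [sq (w _), sq (v _)] at this
      change (w ⬝ᵥ v) ^ 2 ≤ (w ⬝ᵥ w) * (v ⬝ᵥ v) at this
      rwa [hw, one_mul] at this
    have hvv : 0 < v ⬝ᵥ v := by
      simpa using dotProduct_star_self_pos_iff.mpr hv
    rcases hcauchy.lt_or_eq with h | h
    · exact add_pos_of_nonneg_of_pos (by positivity) (mul_pos hb (sub_pos.mpr h))
    · simpa [h] using mul_pos ha hvv
  rw [← det_smul_one_add_smul_vecMulVec hw a hb.ne']
  refine det_le_det_of_posSemidef_sub hA (.of_dotProduct_mulVec_nonneg (hH.sub hAsymm) fun v ↦ ?_)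
  rw [star_trivial, sub_mulVec, dotProduct_sub, sub_nonneg, hquad]
  exact hle v

lemma mul_pow_le_hessianDet {n : ℕ} {u : EuclideanSpace ℝ (Fin n) → ℝ}
    {p e : EuclideanSpace ℝ (Fin n)} (hu : ContDiffAt ℝ 2 u p) (he : ‖e‖ = 1) {a b : ℝ}
    (ha : 0 < a) (hb : 0 < b)
    (hle : ∀ v, a * ⟪e, v⟫ ^ 2 + b * (‖v‖ ^ 2 - ⟪e, v⟫ ^ 2) ≤ fderiv ℝ (fderiv ℝ u) p v v) :
    a * b ^ (n - 1) ≤ hessianDet u p := by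
  have hsymm := hu.isSymmSndFDerivAt (by simp)
  have hinner (v w : EuclideanSpace ℝ (Fin n)) : v.ofLp ⬝ᵥ w.ofLp = ⟪v, w⟫ := by
    simp [PiLp.inner_apply, dotProduct, mul_comm]
  have hdet := mul_pow_le_det_of_le_dotProduct_mulVec (ι := Fin n) (w := e.ofLp)
    (H := .of fun i j ↦ fderiv ℝ (fderiv ℝ u) p (.single i 1) (.single j 1))
    ?_ (by rw [hinner, real_inner_self_eq_norm_sq, he, one_pow]) ha hb fun v ↦ ?_
  · simpa [hessianDet, iteratedFDeriv_two_apply] using hdet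
  · ext i j
    exact hsymm (.single j 1) (.single i 1)
  · convert hle (WithLp.toLp 2 v) using 1
    · rw [← real_inner_self_eq_norm_sq, ← hinner, ← hinner]
    · have hv : WithLp.toLp 2 v = ∑ i, v i • EuclideanSpace.single i (1 : ℝ) := by
        ext j
        simp [Finset.sum_apply, Pi.single_apply]
      simp only [hv, map_sum, map_smul, _root_.sum_apply, _root_.smul_apply,
        dotProduct, mulVec, of_apply, Finset.mul_sum, smul_eq_mul]
      exact Finset.sum_congr rfl fun i _ ↦ Finset.sum_congr rfl fun j _ ↦ by
        rw [hsymm (.single i 1)]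
        ring

end Determinant

section Touching

lemma deriv_deriv_nonneg_of_isLocalMin {φ φ' : ℝ → ℝ} {t c : ℝ}
    (hφ : ∀ᶠ s in 𝓝 t, HasDerivAt φ (φ' s) s) (hφ' : HasDerivAt φ' c t)
    (hmin : IsLocalMin φ t) : 0 ≤ c := by
  by_contra! hc
  have hderiv : deriv φ =ᶠ[𝓝 t] φ' := hφ.mono fun s hs ↦ hs.deriv
  have hderiv₂ : deriv (deriv φ) t = c := by rw [hderiv.deriv_eq, hφ'.deriv]
  have hmax : IsLocalMax φ t := isLocalMax_of_deriv_deriv_neg (hderiv₂ ▸ hc)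
    hmin.deriv_eq_zero hφ.self_of_nhds.continuousAt
  have hconst : φ =ᶠ[𝓝 t] fun _ ↦ φ t := by
    filter_upwards [hmin, hmax] with s hle hge using le_antisymm hge hle
  rw [hconst.deriv.deriv_eq] at hderiv₂
  simp only [deriv_const'] at hderiv₂
  exact hc.ne hderiv₂.symm

variable {E : Type*} [NormedAddCommGroup E] [NormedSpace ℝ E] {u : E → ℝ} {p : E}

lemma hasDerivAt_add_smul (p v : E) (s : ℝ) : HasDerivAt (fun s : ℝ ↦ p + s • v) v s := by
  simpa using ((hasDerivAt_id s).smul_const v).const_add p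

lemma tendsto_add_smul_zero (p v : E) : Tendsto (fun s : ℝ ↦ p + s • v) (𝓝 0) (𝓝 p) := by
  simpa using (hasDerivAt_add_smul p v 0).continuousAt.tendsto

lemma eventually_hasDerivAt_add_smul (hu : ContDiffAt ℝ 2 u p) (v : E) :
    ∀ᶠ s in 𝓝 (0 : ℝ), HasDerivAt (fun s : ℝ ↦ u (p + s • v)) (fderiv ℝ u (p + s • v) v) s := by
  filter_upwards [(tendsto_add_smul_zero p v).eventually (hu.eventually (by simp))] with s hs
  exact (hs.differentiableAt (by simp)).hasFDerivAt.comp_hasDerivAt s (hasDerivAt_add_smul p v s)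

lemma hasDerivAt_fderiv_add_smul (hu : ContDiffAt ℝ 2 u p) (v : E) :
    HasDerivAt (fun s : ℝ ↦ fderiv ℝ u (p + s • v) v) (fderiv ℝ (fderiv ℝ u) p v v) 0 := by
  have hdiff : DifferentiableAt ℝ (fderiv ℝ u) p :=
    (hu.fderiv_right (m := 1) (by norm_num)).differentiableAt (by simp)
  have hfderiv : HasFDerivAt (fderiv ℝ u) (fderiv ℝ (fderiv ℝ u) p) (p + (0 : ℝ) • v) := by
    simpa using hdiff.hasFDerivAt
  have hline := hfderiv.comp_hasDerivAt (0 : ℝ) (hasDerivAt_add_smul p v 0)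
  simpa using hline.clm_apply (hasDerivAt_const (0 : ℝ) v)

lemma le_fderiv_fderiv_of_isLocalMin_sub (hu : ContDiffAt ℝ 2 u p) {w : E → ℝ}
    (hmin : IsLocalMin (fun y ↦ u y - w y) p) {v : E} {w' : ℝ → ℝ} {c : ℝ}
    (hw : ∀ᶠ s in 𝓝 (0 : ℝ), HasDerivAt (fun s : ℝ ↦ w (p + s • v)) (w' s) s)
    (hw' : HasDerivAt w' c 0) : c ≤ fderiv ℝ (fderiv ℝ u) p v v := by
  rw [← sub_nonneg]
  refine deriv_deriv_nonneg_of_isLocalMin (φ := fun s : ℝ ↦ u (p + s • v) - w (p + s • v)) ?_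
    ((hasDerivAt_fderiv_add_smul hu v).sub hw') ?_
  · filter_upwards [eventually_hasDerivAt_add_smul hu v, hw] with s hus hws using hus.sub hws
  · simpa [IsLocalMin, IsMinFilter] using (tendsto_add_smul_zero p v).eventually hmin

end Touching

section Barrier

variable {E : Type*} [NormedAddCommGroup E] [InnerProductSpace ℝ E]

section Line

lemma hasDerivAt_norm_add_smul_sq (r q : E) (s : ℝ) :
    HasDerivAt (fun s : ℝ ↦ ‖r + s • q‖ ^ 2) (2 * ⟪r + s • q, q⟫) s :=
  (hasDerivAt_add_smul r q s).norm_sq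

lemma hasDerivAt_inner_add_smul (r q : E) (s : ℝ) :
    HasDerivAt (fun s : ℝ ↦ ⟪r + s • q, q⟫) (‖q‖ ^ 2) s := by
  simpa using (hasDerivAt_add_smul r q s).inner ℝ (hasDerivAt_const s q)

lemma hasDerivAt_add_mul_rpow {T τ s : ℝ} (hs : T + s * τ ≠ 0) (ρ : ℝ) :
    HasDerivAt (fun s : ℝ ↦ (T + s * τ) ^ ρ) (τ * ρ * (T + s * τ) ^ (ρ - 1)) s :=
  (hasDerivAt_add_smul T τ s).rpow_const (.inl hs)

lemma exists_hasDerivAt_norm_sq_mul_rpow_sub_rpow (r q : E) {T : ℝ} (hT : 0 < T)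
    (τ m M γ : ℝ) :
    ∃ w' : ℝ → ℝ, (∀ᶠ s in 𝓝 (0 : ℝ), HasDerivAt
        (fun s : ℝ ↦ ‖r + s • q‖ ^ 2 * (T + s * τ) ^ m - M * (T + s * τ) ^ γ) (w' s) s) ∧
      HasDerivAt w' (2 * ‖q‖ ^ 2 * T ^ m + 4 * m * τ * ⟪r, q⟫ * T ^ (m - 1)
        + m * (m - 1) * τ ^ 2 * ‖r‖ ^ 2 * T ^ (m - 2)
        + M * (γ * (1 - γ)) * τ ^ 2 * T ^ (γ - 2)) 0 := by
  refine ⟨fun s ↦ 2 * ⟪r + s • q, q⟫ * (T + s * τ) ^ m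
    + ‖r + s • q‖ ^ 2 * (τ * m * (T + s * τ) ^ (m - 1))
    - M * (τ * γ * (T + s * τ) ^ (γ - 1)), ?_, ?_⟩
  · filter_upwards [(tendsto_add_smul_zero T τ).eventually (lt_mem_nhds hT)] with s hs
    exact ((hasDerivAt_norm_add_smul_sq r q s).mul (hasDerivAt_add_mul_rpow hs.ne' m)).sub
      ((hasDerivAt_add_mul_rpow hs.ne' γ).const_mul M)
  · have hT₀ : T + 0 * τ ≠ 0 := by simpa using hT.ne'
    refine (((((hasDerivAt_inner_add_smul r q 0).const_mul 2).mul
      (hasDerivAt_add_mul_rpow hT₀ m)).add ((hasDerivAt_norm_add_smul_sq r q 0).mul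
      ((hasDerivAt_add_mul_rpow hT₀ (m - 1)).const_mul (τ * m)))).sub
      (((hasDerivAt_add_mul_rpow hT₀ (γ - 1)).const_mul (τ * γ)).const_mul M)).congr_deriv ?_
    simp only [zero_smul, zero_mul, add_zero, sub_sub, one_add_one_eq_two]
    ring

lemma le_second_deriv_norm_sq_mul_rpow_sub_rpow {r : E} {T c γ δ M : ℝ} (hT : 0 < T)
    (hr : ‖r‖ ^ 2 ≤ c * T ^ δ)
    (hM : 1 + c * (4 * (γ - δ) ^ 2 + |(γ - δ) * (γ - δ - 1)|) ≤ M * (γ * (1 - γ)))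
    (q : E) (τ : ℝ) :
    T ^ (γ - 2) * τ ^ 2 + T ^ (γ - δ) * ‖q‖ ^ 2 ≤
      2 * ‖q‖ ^ 2 * T ^ (γ - δ) + 4 * (γ - δ) * τ * ⟪r, q⟫ * T ^ (γ - δ - 1)
        + (γ - δ) * (γ - δ - 1) * τ ^ 2 * ‖r‖ ^ 2 * T ^ (γ - δ - 2)
        + M * (γ * (1 - γ)) * τ ^ 2 * T ^ (γ - 2) := by
  have hγ : T ^ (γ - 2) = T ^ (γ - δ - 2) * T ^ δ := by
    rw [← Real.rpow_add hT]; congr 1; ring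
  set m := γ - δ
  have hm₁ : T ^ (m - 1) = T ^ (m - 2) * T := by
    rw [← Real.rpow_add_one hT.ne']; congr 1; ring
  have hm : T ^ m = T ^ (m - 2) * T ^ 2 := by
    rw [← Real.rpow_natCast T 2, ← Real.rpow_add hT]; congr 1; push_cast; ring
  have hsquare : ‖T • q + (2 * m * τ) • r‖ ^ 2 =
      ‖q‖ ^ 2 * T ^ 2 + 4 * m * τ * ⟪r, q⟫ * T + 4 * m ^ 2 * τ ^ 2 * ‖r‖ ^ 2 := by
    rw [norm_add_sq_real, norm_smul, norm_smul, mul_pow, mul_pow, Real.norm_eq_abs, sq_abs,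
      Real.norm_eq_abs, sq_abs, inner_smul_left, inner_smul_right, real_inner_comm]
    simp only [conj_trivial]
    ring
  have hcoeff : 0 ≤ (M * (γ * (1 - γ)) - 1) * T ^ δ + (m * (m - 1) - 4 * m ^ 2) * ‖r‖ ^ 2 := by
    have hlower : ‖r‖ ^ 2 * (4 * m ^ 2 + |m * (m - 1)|) ≤ (M * (γ * (1 - γ)) - 1) * T ^ δ :=
      calc _ ≤ c * T ^ δ * (4 * m ^ 2 + |m * (m - 1)|) := by gcongr
        _ = c * (4 * m ^ 2 + |m * (m - 1)|) * T ^ δ := by ring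
        _ ≤ _ := by gcongr; linarith
    nlinarith [mul_le_mul_of_nonneg_left (neg_abs_le (m * (m - 1))) (sq_nonneg ‖r‖)]
  have hnonneg : 0 ≤ T ^ (m - 2) * (‖T • q + (2 * m * τ) • r‖ ^ 2 + τ ^ 2 *
      ((M * (γ * (1 - γ)) - 1) * T ^ δ + (m * (m - 1) - 4 * m ^ 2) * ‖r‖ ^ 2)) := by positivity
  rw [hsquare] at hnonneg
  rw [hγ, hm₁, hm]
  linarith

end Line

/-- The component of a vector orthogonal to `e`, playing the role of `x'` when `e` is the
direction of the `x_n`-axis. -/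
noncomputable def perpPart (e : E) : E →L[ℝ] E := (ℝ ∙ e)ᗮ.starProjection

/-- The region `{x_n ≥ 0, |x'|² ≤ c x_n ^ δ}` with vertex `0` and axis `e`. -/
def cusp (e : E) (c δ : ℝ) : Set E :=
  {y | 0 ≤ ⟪e, y⟫ ∧ ‖perpPart e y‖ ^ 2 ≤ c * ⟪e, y⟫ ^ δ}

/-- The coefficient of `x_n ^ γ` in `barrier`: large enough for the barrier to be negative and
uniformly convex in `cusp e c δ`. -/
noncomputable def barrierCoeff (c γ δ : ℝ) : ℝ :=
  max (1 + c) ((1 + c * (4 * (γ - δ) ^ 2 + |(γ - δ) * (γ - δ - 1)|)) / (γ * (1 - γ)))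

/-- The barrier `|x'|² x_n ^ (γ - δ) - M x_n ^ γ` adapted to `cusp e c δ`. -/
noncomputable def barrier (e : E) (c γ δ : ℝ) (y : E) : ℝ :=
  ‖perpPart e y‖ ^ 2 * ⟪e, y⟫ ^ (γ - δ) - barrierCoeff c γ δ * ⟪e, y⟫ ^ γ

variable {e : E} {c γ δ : ℝ} {y : E}

lemma norm_perpPart_sq (he : ‖e‖ = 1) (y : E) :
    ‖perpPart e y‖ ^ 2 = ‖y‖ ^ 2 - ⟪e, y⟫ ^ 2 := by
  have hpyth := Submodule.norm_sq_eq_add_norm_sq_starProjection y (ℝ ∙ e)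
  rw [Submodule.starProjection_unit_singleton ℝ he, norm_smul, he, mul_one, Real.norm_eq_abs,
    sq_abs] at hpyth
  exact eq_sub_of_add_eq' hpyth.symm

lemma isClosed_cusp (e : E) (c : ℝ) (hδ : 0 ≤ δ) : IsClosed (cusp e c δ) := by
  have hinner : Continuous fun y ↦ ⟪e, y⟫ := by fun_prop
  exact (isClosed_le continuous_const hinner).inter
    (isClosed_le (by fun_prop) (continuous_const.mul (hinner.rpow_const fun _ ↦ .inr hδ)))

lemma inner_add_smul_self (he : ‖e‖ = 1) (y : E) (ε : ℝ) : ⟪e, y + ε • e⟫ = ⟪e, y⟫ + ε := by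
  rw [inner_add_right, inner_smul_right, real_inner_self_eq_norm_sq, he, one_pow, mul_one]

lemma inner_add_smul_self_le (he : ‖e‖ = 1) (y : E) (ε : ℝ) :
    ⟪e, y + ε • e⟫ ≤ ‖y‖ + ε := by
  rw [inner_add_smul_self he]
  gcongr
  simpa [he] using real_inner_le_norm e y

lemma perpPart_add_smul_self (e y : E) (ε : ℝ) : perpPart e (y + ε • e) = perpPart e y := by
  have hself : perpPart e e = 0 := by
    simp [perpPart, sub_eq_zero, eq_comm (a := e), Submodule.starProjection_eq_self_iff,
      Submodule.mem_span_singleton_self]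
  rw [map_add, map_smul, hself, smul_zero, add_zero]

lemma add_smul_mem_cusp (he : ‖e‖ = 1) (hc : 0 ≤ c) (hδ : 0 ≤ δ) (hy : y ∈ cusp e c δ)
    {ε : ℝ} (hε : 0 ≤ ε) : y + ε • e ∈ cusp e c δ := by
  rw [cusp, mem_ofPred, inner_add_smul_self he, perpPart_add_smul_self]
  refine ⟨add_nonneg hy.1 hε, hy.2.trans ?_⟩
  gcongr
  · exact hy.1
  · exact le_add_of_nonneg_right hε

lemma barrierCoeff_pos (hc : 0 ≤ c) : 0 < barrierCoeff c γ δ :=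
  lt_max_of_lt_left (by positivity)

lemma barrier_le_neg_rpow (hy : y ∈ cusp e c δ) (hpos : 0 < ⟪e, y⟫) :
    barrier e c γ δ y ≤ -⟪e, y⟫ ^ γ := by
  have hperp : ‖perpPart e y‖ ^ 2 * ⟪e, y⟫ ^ (γ - δ) ≤ c * ⟪e, y⟫ ^ γ := by
    calc _ ≤ c * ⟪e, y⟫ ^ δ * ⟪e, y⟫ ^ (γ - δ) := by gcongr; exact hy.2
      _ = _ := by rw [mul_assoc, ← Real.rpow_add hpos, add_sub_cancel]
  have hcoeff : (1 + c) * ⟪e, y⟫ ^ γ ≤ barrierCoeff c γ δ * ⟪e, y⟫ ^ γ := by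
    gcongr; exact le_max_left _ _
  rw [barrier]
  linarith

lemma neg_mul_rpow_le_barrier (hpos : 0 ≤ ⟪e, y⟫) :
    -(barrierCoeff c γ δ * ⟪e, y⟫ ^ γ) ≤ barrier e c γ δ y := by
  rw [barrier, neg_le_sub_iff_le_add]
  exact le_add_of_nonneg_left (by positivity)

lemma continuousAt_barrier (hpos : 0 < ⟪e, y⟫) : ContinuousAt (barrier e c γ δ) y := by
  have hrpow (ρ : ℝ) : ContinuousAt (fun y ↦ ⟪e, y⟫ ^ ρ) y :=
    ContinuousAt.rpow_const (by fun_prop) (.inl hpos.ne')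
  exact (ContinuousAt.mul (by fun_prop) (hrpow _)).sub (continuousAt_const.mul (hrpow _))

lemma exists_le_second_deriv_barrier (hγ : γ ∈ Ioo 0 1) (hy : y ∈ cusp e c δ)
    (hpos : 0 < ⟪e, y⟫) (v : E) :
    ∃ (w' : ℝ → ℝ) (w'' : ℝ),
      (∀ᶠ s in 𝓝 (0 : ℝ), HasDerivAt (fun s : ℝ ↦ barrier e c γ δ (y + s • v)) (w' s) s) ∧
      HasDerivAt w' w'' 0 ∧
      ⟪e, y⟫ ^ (γ - 2) * ⟪e, v⟫ ^ 2 + ⟪e, y⟫ ^ (γ - δ) * ‖perpPart e v‖ ^ 2 ≤ w'' := by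
  obtain ⟨w', hw, hw'⟩ := exists_hasDerivAt_norm_sq_mul_rpow_sub_rpow (perpPart e y)
    (perpPart e v) hpos ⟪e, v⟫ (γ - δ) (barrierCoeff c γ δ) γ
  refine ⟨w', _, ?_, hw', le_second_deriv_norm_sq_mul_rpow_sub_rpow hpos hy.2 ?_ _ _⟩
  · simpa only [barrier, map_add, map_smul, inner_add_right, inner_smul_right] using hw
  · exact (div_le_iff₀ (mul_pos hγ.1 (sub_pos.mpr hγ.2))).mp (le_max_right _ _)

end Barrier

section Geometry

lemma inter_frontier_nonempty_of_isPreconnected {X : Type*} [TopologicalSpace X] {s t : Set X}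
    (ht : IsPreconnected t) (hts : (t ∩ s).Nonempty) (htsc : (t ∩ sᶜ).Nonempty) :
    (t ∩ frontier s).Nonempty := by
  by_contra! hempty
  have hcover : t ⊆ interior s ∪ (closure s)ᶜ := fun x hx ↦ by
    by_contra! hx'
    rw [mem_union, mem_compl_iff, not_or, not_not] at hx'
    exact hempty.subset ⟨hx, hx'.2, hx'.1⟩
  obtain ⟨x, hxt, hxs⟩ := hts
  obtain ⟨y, hyt, hys⟩ := htsc
  obtain ⟨z, -, hzint, hzcl⟩ := ht _ _ isOpen_interior isClosed_closure.isOpen_compl hcover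
    ⟨x, hxt, (hcover hxt).resolve_right fun h ↦ h (subset_closure hxs)⟩
    ⟨y, hyt, (hcover hyt).resolve_left fun h ↦ hys (interior_subset h)⟩
  exact hzcl (subset_closure (interior_subset hzint))

lemma infDist_frontier_le_dist {E : Type*} [NormedAddCommGroup E] [NormedSpace ℝ E] {s : Set E}
    {x q : E} (hx : x ∈ s) (hq : q ∉ s) : Metric.infDist x (frontier s) ≤ dist x q := by
  obtain ⟨z, hzseg, hz⟩ := inter_frontier_nonempty_of_isPreconnected
    (convex_segment x q).isPreconnected ⟨x, left_mem_segment ℝ x q, hx⟩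
    ⟨q, right_mem_segment ℝ x q, hq⟩
  refine (Metric.infDist_le_dist_of_mem hz).trans ?_
  rw [dist_comm]
  exact segment_subset_closedBall_left x q hzseg

lemma infDist_frontier_le_inner {E : Type*} [NormedAddCommGroup E] [InnerProductSpace ℝ E]
    {s : Set E} {e x₁ : E} (he : ‖e‖ = 1) (hs : ∀ y ∈ s, 0 < ⟪e, y - x₁⟫) {x : E} (hx : x ∈ s) :
    Metric.infDist x (frontier s) ≤ ⟪e, x - x₁⟫ := by
  set q := x - ⟪e, x - x₁⟫ • e with hq
  have hqs : q ∉ s := fun hmem ↦ by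
    have hinner : ⟪e, q - x₁⟫ = 0 := by
      rw [hq, sub_right_comm, inner_sub_right, inner_smul_right, real_inner_self_eq_norm_sq, he,
        one_pow, mul_one, sub_self]
    exact (hs q hmem).ne' hinner
  calc Metric.infDist x (frontier s) ≤ dist x q := infDist_frontier_le_dist hx hqs
    _ = ⟪e, x - x₁⟫ := by
      rw [dist_eq_norm, hq, sub_sub_cancel, norm_smul, he, mul_one,
        Real.norm_of_nonneg (hs x hx).le]

lemma mem_cusp_of_mul_rpow_le {E : Type*} [NormedAddCommGroup E] [InnerProductSpace ℝ E]
    {e y : E} {a η : ℝ} (ha : 0 < a) (hη : 0 < η) (hy : η * ‖perpPart e y‖ ^ a ≤ ⟪e, y⟫) :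
    y ∈ cusp e (η⁻¹ ^ (2 / a)) (2 / a) := by
  have hinner : 0 ≤ ⟪e, y⟫ := le_trans (by positivity) hy
  refine ⟨hinner, ?_⟩
  calc ‖perpPart e y‖ ^ 2 = (‖perpPart e y‖ ^ a) ^ (2 / a) := by
        rw [← Real.rpow_mul (norm_nonneg _), mul_div_cancel₀ _ ha.ne', Real.rpow_two]
    _ ≤ (η⁻¹ * ⟪e, y⟫) ^ (2 / a) := by
        gcongr
        rwa [inv_mul_eq_div, le_div_iff₀' hη]
    _ = η⁻¹ ^ (2 / a) * ⟪e, y⟫ ^ (2 / a) := Real.mul_rpow (by positivity) hinner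

lemma exists_sub_mem_cusp_of_isATypePoint {n : ℕ} {hn : 0 < n}
    {Ω : Set (EuclideanSpace ℝ (Fin n))} {a η : ℝ} {x₀ : EuclideanSpace ℝ (Fin n)} (ha : 0 < a)
    (hη : 0 < η) (h : IsATypePoint hn Ω a η x₀) :
    ∃ e : EuclideanSpace ℝ (Fin n), ‖e‖ = 1 ∧
      ∀ y ∈ closure Ω, y - x₀ ∈ cusp e (η⁻¹ ^ (2 / a)) (2 / a) := by
  obtain ⟨f, hf⟩ := h
  set l := lastIdx n hn
  set e := f.symm (EuclideanSpace.single l 1)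
  have he : ‖e‖ = 1 := by simp [e]
  have hinner (y) : ⟪e, y⟫ = f y l := by
    rw [← f.inner_map_map, f.apply_symm_apply, EuclideanSpace.inner_single_left, map_one, one_mul]
  have hperp (y) : √(∑ j ∈ Finset.univ.erase l, f y j ^ 2) = ‖perpPart e y‖ := by
    rw [Real.sqrt_eq_iff_eq_sq (by positivity) (norm_nonneg _), norm_perpPart_sq he, hinner,
      ← f.norm_map, EuclideanSpace.real_norm_sq_eq, eq_sub_iff_add_eq']
    exact Finset.add_sum_erase _ (fun j ↦ f y j ^ 2) (Finset.mem_univ l)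
  have hmaps : MapsTo (fun y ↦ y - x₀) Ω (cusp e (η⁻¹ ^ (2 / a)) (2 / a)) := fun y hy ↦
    mem_cusp_of_mul_rpow_le ha hη (by rw [← hperp, hinner]; exact hf y hy)
  refine ⟨e, he, fun y hy ↦ ?_⟩
  rw [← (isClosed_cusp e (η⁻¹ ^ (2 / a)) (by positivity : 0 ≤ 2 / a)).closure_eq]
  exact hmaps.closure (by fun_prop) hy

end Geometry

section Comparison

variable {n : ℕ} {Ω : Set (EuclideanSpace ℝ (Fin n))} {u : EuclideanSpace ℝ (Fin n) → ℝ}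
  {e x₁ : EuclideanSpace ℝ (Fin n)} {c γ δ K : ℝ}

lemma mul_pow_le_hessianDet_of_isLocalMin_sub_barrier {p : EuclideanSpace ℝ (Fin n)}
    (hu : ContDiffAt ℝ 2 u p) (he : ‖e‖ = 1) (hγ : γ ∈ Ioo 0 1) (hK : 0 < K)
    (hcusp : p - x₁ ∈ cusp e c δ) (hpos : 0 < ⟪e, p - x₁⟫)
    (hmin : IsLocalMin (fun y ↦ u y - K * barrier e c γ δ (y - x₁)) p) :
    K * ⟪e, p - x₁⟫ ^ (γ - 2) * (K * ⟪e, p - x₁⟫ ^ (γ - δ)) ^ (n - 1) ≤ hessianDet u p := by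
  refine mul_pow_le_hessianDet hu he (by positivity) (by positivity) fun v ↦ ?_
  obtain ⟨w', w'', hw, hw', hle⟩ := exists_le_second_deriv_barrier hγ hcusp hpos v
  have hline : ∀ᶠ s in 𝓝 (0 : ℝ), HasDerivAt
      (fun s : ℝ ↦ K * barrier e c γ δ (p + s • v - x₁)) (K * w' s) s := by
    filter_upwards [hw] with s hs
    simpa only [sub_add_eq_add_sub] using hs.const_mul K
  calc _ = K * (⟪e, p - x₁⟫ ^ (γ - 2) * ⟪e, v⟫ ^ 2
        + ⟪e, p - x₁⟫ ^ (γ - δ) * ‖perpPart e v‖ ^ 2) := by rw [norm_perpPart_sq he]; ring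
    _ ≤ K * w'' := by gcongr
    _ ≤ fderiv ℝ (fderiv ℝ u) p v v :=
      le_fderiv_fderiv_of_isLocalMin_sub hu hmin hline (hw'.const_mul K)

lemma mul_barrier_le_of_hessianDet_lt (hΩ : IsOpen Ω) (hΩb : Bornology.IsBounded Ω)
    (hucont : ContinuousOn u (closure Ω)) (huC2 : ContDiffOn ℝ 2 u Ω)
    (hubd : ∀ x ∈ frontier Ω, 0 ≤ u x) (he : ‖e‖ = 1) (hγ : γ ∈ Ioo 0 1) (hK : 0 < K)
    (hcusp : ∀ y ∈ closure Ω, y - x₁ ∈ cusp e c δ) (hpos : ∀ y ∈ closure Ω, 0 < ⟪e, y - x₁⟫)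
    (hdet : ∀ p ∈ Ω, u p < K * barrier e c γ δ (p - x₁) →
      hessianDet u p < K * ⟪e, p - x₁⟫ ^ (γ - 2) * (K * ⟪e, p - x₁⟫ ^ (γ - δ)) ^ (n - 1))
    {z : EuclideanSpace ℝ (Fin n)} (hz : z ∈ closure Ω) :
    K * barrier e c γ δ (z - x₁) ≤ u z := by
  set W := fun y ↦ K * barrier e c γ δ (y - x₁)
  have hWcont : ContinuousOn W (closure Ω) := fun y hy ↦
    ((continuousAt_barrier (hpos y hy)).comp (f := fun y ↦ y - x₁)
      (by fun_prop)).const_mul K |>.continuousWithinAt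
  obtain ⟨p, hp, hmin⟩ := hΩb.isCompact_closure.exists_isMinOn ⟨z, hz⟩ (hucont.sub hWcont)
  by_contra! hlt
  have hup : u p < W p := by
    have : u p - W p ≤ u z - W z := hmin hz
    linarith
  have hpΩ : p ∈ Ω := by
    by_contra hpΩ
    have hWp : W p ≤ 0 := mul_nonpos_of_nonneg_of_nonpos hK.le <|
      (barrier_le_neg_rpow (hcusp p hp) (hpos p hp)).trans
        (neg_nonpos.mpr (Real.rpow_nonneg (hpos p hp).le γ))
    exact (hup.trans_le hWp).not_ge (hubd p (hΩ.frontier_eq ▸ ⟨hp, hpΩ⟩))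
  have hnhds : Ω ∈ 𝓝 p := hΩ.mem_nhds hpΩ
  exact (hdet p hpΩ hup).not_ge <|
    mul_pow_le_hessianDet_of_isLocalMin_sub_barrier (huC2.contDiffAt hnhds) he hγ hK (hcusp p hp)
      (hpos p hp) (hmin.isLocalMin (mem_of_superset hnhds subset_closure))

-- The exponents of `T` on the two sides differ by `β - n + 1 + (n - 1) * δ - γ * (n + α)`: this
-- is what restricts `γ`.
lemma mul_rpow_mul_rpow_neg_lt {A α β T T₀ d w : ℝ} (hn : n ≠ 0) (hA : 0 ≤ A) (hα : 0 ≤ α)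
    (hβ : (n : ℝ) + 1 ≤ β) (hγ : γ * (n + α) ≤ β - n + 1 + (n - 1) * δ) (hK : 0 < K)
    (hK' : A * T₀ ^ (β - n + 1 + (n - 1) * δ - γ * (n + α)) < K ^ (n + α))
    (hT : 0 < T) (hTT₀ : T ≤ T₀) (hd₀ : 0 ≤ d) (hd : d ≤ T) (hw : K * T ^ γ ≤ w) :
    A * d ^ (β - n - 1) * w ^ (-α) < K * T ^ (γ - 2) * (K * T ^ (γ - δ)) ^ (n - 1) := by
  set κ := β - n + 1 + (n - 1) * δ - γ * (n + α) with hκ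
  set ρ := γ - 2 + (γ - δ) * (n - 1) with hρ
  have hβ' : 0 ≤ β - n - 1 := by linarith
  have hK_pow : K ^ ((n : ℝ) + α) * K ^ (-α) = K * K ^ (n - 1) := by
    rw [← Real.rpow_add hK, add_neg_cancel_right, Real.rpow_natCast, mul_pow_sub_one hn]
  have hT_pow : T ^ (β - n - 1) * T ^ (γ * -α) = T ^ κ * T ^ ρ := by
    rw [← Real.rpow_add hT, ← Real.rpow_add hT, hκ, hρ]
    ring_nf
  have hw₀ : 0 ≤ w := le_trans (by positivity) hw
  have hw_pow : w ^ (-α) ≤ K ^ (-α) * T ^ (γ * -α) := by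
    rw [Real.rpow_mul hT.le, ← Real.mul_rpow hK.le (by positivity)]
    exact Real.rpow_le_rpow_of_nonpos (by positivity) hw (neg_nonpos.mpr hα)
  calc A * d ^ (β - n - 1) * w ^ (-α)
      ≤ A * T ^ (β - n - 1) * (K ^ (-α) * T ^ (γ * -α)) := by gcongr
    _ = A * T ^ κ * K ^ (-α) * T ^ ρ := by linear_combination A * K ^ (-α) * hT_pow
    _ ≤ A * T₀ ^ κ * K ^ (-α) * T ^ ρ := by gcongr
    _ < K ^ ((n : ℝ) + α) * K ^ (-α) * T ^ ρ := by gcongr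
    _ = K * T ^ (γ - 2) * (K * T ^ (γ - δ)) ^ (n - 1) := by
      rw [hK_pow, mul_pow, ← Real.rpow_mul_natCast hT.le,
        Nat.cast_sub (Nat.one_le_iff_ne_zero.mpr hn), Nat.cast_one, hρ, Real.rpow_add hT]
      ring

/-- Supersolutions of `det D²u = A d_x^{β-n-1} |u|^{-α}` in `Ω`, `u = 0` on `∂Ω`. The inequality is
only required where `u < 0`, so that it never involves a negative power of `0`. -/
structure IsMongeAmpereSupersolution (Ω : Set (EuclideanSpace ℝ (Fin n))) (A α β : ℝ)
    (u : EuclideanSpace ℝ (Fin n) → ℝ) : Prop where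
  continuousOn : ContinuousOn u (closure Ω)
  contDiffOn : ContDiffOn ℝ 2 u Ω
  eq_zero : ∀ x ∈ frontier Ω, u x = 0
  hessianDet_le : ∀ x ∈ Ω, u x < 0 →
    hessianDet u x ≤ A * Metric.infDist x (frontier Ω) ^ (β - n - 1) * |u x| ^ (-α)

variable {A α β T₀ : ℝ}

lemma mul_barrier_le_of_isMongeAmpereSupersolution (hn : n ≠ 0) (hA : 0 ≤ A) (hα : 0 ≤ α)
    (hβ : (n : ℝ) + 1 ≤ β) (hγ : γ ∈ Ioo 0 1)
    (hγ' : γ * (n + α) ≤ β - n + 1 + (n - 1) * δ) (hK : 0 < K)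
    (hK' : A * T₀ ^ (β - n + 1 + (n - 1) * δ - γ * (n + α)) < K ^ (n + α))
    (hΩ : IsOpen Ω) (hΩb : Bornology.IsBounded Ω) (hu : IsMongeAmpereSupersolution Ω A α β u)
    (he : ‖e‖ = 1) (hcusp : ∀ y ∈ closure Ω, y - x₁ ∈ cusp e c δ)
    (hpos : ∀ y ∈ closure Ω, 0 < ⟪e, y - x₁⟫) (hT₀ : ∀ y ∈ closure Ω, ⟪e, y - x₁⟫ ≤ T₀)
    {z : EuclideanSpace ℝ (Fin n)} (hz : z ∈ closure Ω) :
    K * barrier e c γ δ (z - x₁) ≤ u z := by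
  refine mul_barrier_le_of_hessianDet_lt hΩ hΩb hu.continuousOn hu.contDiffOn
    (fun x hx ↦ (hu.eq_zero x hx).ge) he hγ hK hcusp hpos (fun p hp hup ↦ ?_) hz
  have hpc := subset_closure hp
  have hup' : u p < -(K * ⟪e, p - x₁⟫ ^ γ) := by
    refine hup.trans_le ?_
    rw [← mul_neg]
    gcongr
    exact barrier_le_neg_rpow (hcusp p hpc) (hpos p hpc)
  have hneg : u p < 0 := hup'.trans <|
    neg_lt_zero.mpr (mul_pos hK (Real.rpow_pos_of_pos (hpos p hpc) γ))
  have hdist : Metric.infDist p (frontier Ω) ≤ ⟪e, p - x₁⟫ :=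
    infDist_frontier_le_inner he (fun y hy ↦ hpos y (subset_closure hy)) hp
  have hu_abs : K * ⟪e, p - x₁⟫ ^ γ ≤ |u p| := by
    rw [abs_of_neg hneg]
    exact (lt_neg_of_lt_neg hup').le
  exact (hu.hessianDet_le p hp hneg).trans_lt <| mul_rpow_mul_rpow_neg_lt hn hA hα hβ hγ' hK hK'
    (hpos p hpc) (hT₀ p hpc) Metric.infDist_nonneg hdist hu_abs

-- Moving the vertex of the barrier outside `Ω` makes the barrier smooth near `closure Ω`.
lemma mul_barrier_add_smul_le_of_isMongeAmpereSupersolution (hn : n ≠ 0) (hA : 0 ≤ A)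
    (hα : 0 ≤ α) (hβ : (n : ℝ) + 1 ≤ β) (hγ : γ ∈ Ioo 0 1)
    (hγ' : γ * (n + α) ≤ β - n + 1 + (n - 1) * δ) (hK : 0 < K)
    (hK' : A * (2 * Metric.diam Ω) ^ (β - n + 1 + (n - 1) * δ - γ * (n + α)) < K ^ (n + α))
    (hΩ : IsOpen Ω) (hΩb : Bornology.IsBounded Ω) (hu : IsMongeAmpereSupersolution Ω A α β u)
    (hc : 0 ≤ c) (hδ : 0 ≤ δ) {x₀ : EuclideanSpace ℝ (Fin n)} (hx₀ : x₀ ∈ closure Ω)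
    (he : ‖e‖ = 1) (hcusp : ∀ y ∈ closure Ω, y - x₀ ∈ cusp e c δ) {ε : ℝ} (hε : 0 < ε)
    (hεdiam : ε ≤ Metric.diam Ω) {z : EuclideanSpace ℝ (Fin n)} (hz : z ∈ closure Ω) :
    K * barrier e c γ δ (z - x₀ + ε • e) ≤ u z := by
  have hsub (y) : y - x₀ + ε • e = y - (x₀ - ε • e) := by abel
  rw [hsub]
  refine mul_barrier_le_of_isMongeAmpereSupersolution hn hA hα hβ hγ hγ' hK hK' hΩ hΩb hu he
    ?_ ?_ ?_ hz <;> intro y hy <;> rw [← hsub]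
  · exact add_smul_mem_cusp he hc hδ (hcusp y hy) hε.le
  · rw [inner_add_smul_self he]
    exact add_pos_of_nonneg_of_pos (hcusp y hy).1 hε
  · have hdiam : ‖y - x₀‖ ≤ Metric.diam Ω := by
      rw [← dist_eq_norm, ← Metric.diam_closure]
      exact Metric.dist_le_diam_of_mem hΩb.closure hy hx₀
    linarith [inner_add_smul_self_le he (y - x₀) ε]

lemma neg_le_mul_norm_sub_rpow_of_sub_mem_cusp (hn : n ≠ 0) (hA : 0 ≤ A) (hα : 0 ≤ α)
    (hβ : (n : ℝ) + 1 ≤ β) (hγ : γ ∈ Ioo 0 1)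
    (hγ' : γ * (n + α) ≤ β - n + 1 + (n - 1) * δ) (hK : 0 < K)
    (hK' : A * (2 * Metric.diam Ω) ^ (β - n + 1 + (n - 1) * δ - γ * (n + α)) < K ^ (n + α))
    (hΩ : IsOpen Ω) (hΩb : Bornology.IsBounded Ω) (hu : IsMongeAmpereSupersolution Ω A α β u)
    (hc : 0 ≤ c) (hδ : 0 ≤ δ) {x₀ : EuclideanSpace ℝ (Fin n)} (hx₀ : x₀ ∈ frontier Ω)
    (he : ‖e‖ = 1) (hcusp : ∀ y ∈ closure Ω, y - x₀ ∈ cusp e c δ)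
    {z : EuclideanSpace ℝ (Fin n)} (hz : z ∈ closure Ω) :
    -u z ≤ K * barrierCoeff c γ δ * 2 ^ γ * ‖z - x₀‖ ^ γ := by
  have hM : 0 < barrierCoeff c γ δ := barrierCoeff_pos hc
  rcases eq_or_ne z x₀ with rfl | hzx₀
  · rw [hu.eq_zero z hx₀, neg_zero]
    positivity
  have hx₀' : x₀ ∈ closure Ω := frontier_subset_closure hx₀
  set ε := ‖z - x₀‖ with hεdef
  have hε : 0 < ε := norm_pos_iff.mpr (sub_ne_zero.mpr hzx₀)
  have hεdiam : ε ≤ Metric.diam Ω := by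
    rw [hεdef, ← dist_eq_norm, ← Metric.diam_closure]
    exact Metric.dist_le_diam_of_mem hΩb.closure hz hx₀'
  have hinner₀ : 0 ≤ ⟪e, z - x₀ + ε • e⟫ := by
    rw [inner_add_smul_self he]
    exact add_nonneg (hcusp z hz).1 hε.le
  have hinner : ⟪e, z - x₀ + ε • e⟫ ≤ 2 * ε :=
    (inner_add_smul_self_le he _ ε).trans_eq (two_mul ε).symm
  calc -u z ≤ K * -barrier e c γ δ (z - x₀ + ε • e) := by
        rw [mul_neg, neg_le_neg_iff]
        exact mul_barrier_add_smul_le_of_isMongeAmpereSupersolution hn hA hα hβ hγ hγ' hK hK' hΩ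
          hΩb hu hc hδ hx₀' he hcusp hε hεdiam hz
    _ ≤ K * (barrierCoeff c γ δ * ⟪e, z - x₀ + ε • e⟫ ^ γ) := by
        gcongr
        exact neg_le.mp (neg_mul_rpow_le_barrier hinner₀)
    _ ≤ K * (barrierCoeff c γ δ * (2 * ε) ^ γ) := by
        gcongr
        exact hγ.1.le
    _ = K * barrierCoeff c γ δ * 2 ^ γ * ε ^ γ := by
        rw [Real.mul_rpow zero_le_two hε.le]
        ring

lemma exists_neg_le_mul_norm_sub_rpow {a η : ℝ} {hn : 0 < n} (ha : 0 < a) (hη : 0 < η)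
    (hA : 0 ≤ A) (hα : 0 ≤ α) (hβ : (n : ℝ) + 1 ≤ β) (hγ : γ ∈ Ioo 0 1)
    (hγ' : γ * (n + α) ≤ β - n + 1 + (2 * n - 2) / a)
    (hΩ : IsOpen Ω) (hΩb : Bornology.IsBounded Ω) (hΩtype : IsATypeDomain hn Ω a η)
    (hu : IsMongeAmpereSupersolution Ω A α β u) :
    ∃ C : ℝ, 0 < C ∧ ∀ x₀ ∈ frontier Ω, ∀ z ∈ closure Ω, -u z ≤ C * ‖z - x₀‖ ^ γ := by
  set κ := β - n + 1 + (n - 1) * (2 / a) - γ * (n + α)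
  have hexp : γ * (n + α) ≤ β - n + 1 + (n - 1) * (2 / a) := hγ'.trans_eq (by ring)
  have hnα : 0 < (n : ℝ) + α := by positivity
  obtain ⟨K, hK', hK⟩ := (((tendsto_rpow_atTop hnα).eventually_gt_atTop
    (A * (2 * Metric.diam Ω) ^ κ)).and (eventually_gt_atTop 0)).exists
  have hc : 0 ≤ η⁻¹ ^ (2 / a) := by positivity
  refine ⟨K * barrierCoeff (η⁻¹ ^ (2 / a)) γ (2 / a) * 2 ^ γ,
    mul_pos (mul_pos hK (barrierCoeff_pos hc)) (by positivity), fun x₀ hx₀ z hz ↦ ?_⟩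
  obtain ⟨e, he, hcusp⟩ := exists_sub_mem_cusp_of_isATypePoint ha hη (hΩtype x₀ hx₀)
  exact neg_le_mul_norm_sub_rpow_of_sub_mem_cusp hn.ne' hA hα hβ hγ hexp hK hK' hΩ hΩb hu hc
    (by positivity) hx₀ he hcusp hz

end Comparison

section Holder

lemma convexOn_closure {E : Type*} [AddCommGroup E] [TopologicalSpace E] [IsTopologicalAddGroup E]
    [Module ℝ E] [ContinuousSMul ℝ E] {s : Set E} {f : E → ℝ} (hf : ConvexOn ℝ s f)
    (hcont : ContinuousOn f (closure s)) : ConvexOn ℝ (closure s) f := by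
  refine ⟨hf.1.closure, fun x hx y hy a b ha hb hab ↦ ?_⟩
  have hxy : (x, y) ∈ closure (s ×ˢ s) := by
    rw [closure_prod_eq]
    exact ⟨hx, hy⟩
  refine le_on_closure (s := s ×ˢ s) (f := fun q : E × E ↦ f (a • q.1 + b • q.2))
    (g := fun q : E × E ↦ a * f q.1 + b * f q.2) (fun q hq ↦ hf.2 hq.1 hq.2 ha hb hab) ?_ ?_
    hxy <;> rw [closure_prod_eq]
  · exact hcont.comp (by fun_prop) fun q hq ↦ hf.1.closure hq.1 hq.2 ha hb hab
  · exact (continuousOn_const.mul (hcont.comp continuousOn_fst fun q hq ↦ hq.1)).add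
      (continuousOn_const.mul (hcont.comp continuousOn_snd fun q hq ↦ hq.2))

lemma reflection_mem_and_add_le_of_convexOn {E : Type*} [AddCommGroup E] [Module ℝ E]
    {s : Set E} {f : E → ℝ} (hf : ConvexOn ℝ s f) {x y z : E} (hy : y ∈ s) (hz : z ∈ s)
    (hx : x ∈ segment ℝ y z) :
    y + z - x ∈ s ∧ f x + f (y + z - x) ≤ f y + f z := by
  obtain ⟨a, b, ha, hb, hab, rfl⟩ := hx
  have hrefl : y + z - (a • y + b • z) = b • y + a • z := by
    rw [← eq_sub_iff_add_eq'] at hab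
    rw [hab]
    module
  have hle := hf.2 hy hz ha hb hab
  have hle' := hf.2 hy hz hb ha (add_comm a b ▸ hab)
  rw [hrefl]
  refine ⟨hf.1 hy hz hb ha (add_comm a b ▸ hab), ?_⟩
  simp only [smul_eq_mul] at hle hle'
  linear_combination hle + hle' + (f y + f z) * hab

variable {E : Type*} [NormedAddCommGroup E] [NormedSpace ℝ E] {s : Set E}

lemma exists_mem_frontier_mem_segment (hs : Bornology.IsBounded s) {x y : E}
    (hx : x ∈ closure s) (hxy : x ≠ y) : ∃ z ∈ frontier s, x ∈ segment ℝ y z := by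
  by_cases hxf : x ∈ frontier s
  · exact ⟨x, hxf, right_mem_segment ℝ y x⟩
  have hxs : x ∈ s := by
    by_contra hxs
    exact hxf ⟨hx, fun h ↦ hxs (interior_subset h)⟩
  set ray := (fun t : ℝ ↦ x + t • (x - y)) '' Ici 0
  obtain ⟨r, hr⟩ := hs.subset_ball x
  have hr₀ : 0 < r := by simpa using hr hxs
  have hleave : x + (r / ‖x - y‖) • (x - y) ∉ s := fun hmem ↦ by
    have hnorm : ‖x - y‖ ≠ 0 := norm_ne_zero_iff.mpr (sub_ne_zero.mpr hxy)
    have := hr hmem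
    rw [Metric.mem_ball, dist_eq_norm, add_sub_cancel_left, norm_smul, norm_div, norm_norm,
      div_mul_cancel₀ _ hnorm, Real.norm_of_nonneg hr₀.le] at this
    exact this.false
  have hray : IsPreconnected ray :=
    isPreconnected_Ici.image _ (by fun_prop)
  obtain ⟨-, ⟨t, ht, rfl⟩, hz⟩ := inter_frontier_nonempty_of_isPreconnected hray
    ⟨x, ⟨0, self_mem_Ici, by simp⟩, hxs⟩ ⟨_, ⟨_, div_nonneg hr₀.le (norm_nonneg _), rfl⟩, hleave⟩
  refine ⟨_, hz, mem_segment_iff_sameRay.mpr ?_⟩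
  rw [add_sub_cancel_left]
  exact SameRay.sameRay_nonneg_smul_right _ ht

-- Extend the segment from `y` through `x` until it hits the boundary at `z`, and reflect `x` in
-- the midpoint of `y` and `z`: the reflected point is as close to `z` as `x` is to `y`.
lemma sub_le_mul_norm_sub_rpow_of_frontier {u : E → ℝ} {C γ : ℝ} (hC : 0 ≤ C)
    (hs : Bornology.IsBounded s) (hconv : ConvexOn ℝ (closure s) u)
    (hubd : ∀ x ∈ frontier s, u x = 0)
    (hest : ∀ z ∈ frontier s, ∀ w ∈ closure s, -u w ≤ C * ‖w - z‖ ^ γ) {x y : E}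
    (hx : x ∈ closure s) (hy : y ∈ closure s) : u x - u y ≤ C * ‖x - y‖ ^ γ := by
  rcases eq_or_ne x y with rfl | hxy
  · rw [sub_self]
    positivity
  obtain ⟨z, hz, hxz⟩ := exists_mem_frontier_mem_segment hs hx hxy
  obtain ⟨hmem, hle⟩ :=
    reflection_mem_and_add_le_of_convexOn hconv hy (frontier_subset_closure hz) hxz
  have hw := hest z hz _ hmem
  rw [add_sub_right_comm, add_sub_cancel_right, norm_sub_rev, ← add_sub_right_comm] at hw
  rw [hubd z hz] at hle
  linarith

lemma abs_sub_le_mul_norm_sub_rpow_of_frontier {u : E → ℝ} {C γ : ℝ} (hC : 0 ≤ C)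
    (hs : Bornology.IsBounded s) (hconv : ConvexOn ℝ s u) (hcont : ContinuousOn u (closure s))
    (hubd : ∀ x ∈ frontier s, u x = 0)
    (hest : ∀ z ∈ frontier s, ∀ w ∈ closure s, -u w ≤ C * ‖w - z‖ ^ γ) {x y : E}
    (hx : x ∈ closure s) (hy : y ∈ closure s) : |u x - u y| ≤ C * ‖x - y‖ ^ γ := by
  have hconv' := convexOn_closure hconv hcont
  refine abs_sub_le_iff.mpr
    ⟨sub_le_mul_norm_sub_rpow_of_frontier hC hs hconv' hubd hest hx hy, ?_⟩
  rw [norm_sub_rev]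
  exact sub_le_mul_norm_sub_rpow_of_frontier hC hs hconv' hubd hest hy hx

end Holder

lemma exponent_mem_Ioo_and_mul_le {n : ℕ} {a α β γ : ℝ} (hn : 1 ≤ n) (ha : 0 < a) (hα : 0 ≤ α)
    (hβ : (n : ℝ) + 1 ≤ β)
    (hγ : (β < α + 2 * n - 1 - (2 * n - 2) / a ∧
        γ = (β - n + 1) / (n + α) + (2 * n - 2) / (a * (n + α))) ∨
      (α + 2 * n - 1 - (2 * n - 2) / a ≤ β ∧ γ ∈ Ioo 0 1)) :
    γ ∈ Ioo 0 1 ∧ γ * (n + α) ≤ β - n + 1 + (2 * n - 2) / a := by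
  have hn' : (1 : ℝ) ≤ n := mod_cast hn
  have hnα : 0 < n + α := by linarith
  have hdiv : 0 ≤ (2 * n - 2) / a := div_nonneg (by linarith) ha.le
  rcases hγ with ⟨hlt, hγ⟩ | ⟨hle, hγ⟩
  · have hγ' : γ * (n + α) = β - n + 1 + (2 * n - 2) / a := by
      rw [hγ]
      field_simp
    exact ⟨⟨(mul_pos_iff_of_pos_right hnα).mp (by linarith),
      (mul_lt_iff_lt_one_left hnα).mp (by linarith)⟩, hγ'.le⟩
  · exact ⟨hγ, by linarith [mul_le_of_le_one_left hnα.le hγ.2.le]⟩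

theorem global_holder_regularity_aEta_domain_general {n : ℕ} {hn : 0 < n} {a η A α β γ : ℝ}
    (ha : 0 < a) (hη : 0 < η) (hA : 0 ≤ A) (hα : 0 ≤ α) (hβ : (n : ℝ) + 1 ≤ β)
    (hγ : γ ∈ Ioo 0 1) (hγ' : γ * (n + α) ≤ β - n + 1 + (2 * n - 2) / a)
    {Ω : Set (EuclideanSpace ℝ (Fin n))} {u : EuclideanSpace ℝ (Fin n) → ℝ} (hΩ : IsOpen Ω)
    (hΩb : Bornology.IsBounded Ω) (hΩtype : IsATypeDomain hn Ω a η) (huconv : ConvexOn ℝ Ω u)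
    (hu : IsMongeAmpereSupersolution Ω A α β u) :
    ∃ C : ℝ, 0 < C ∧
      ∀ x ∈ closure Ω, ∀ y ∈ closure Ω, |u x - u y| ≤ C * ‖x - y‖ ^ γ := by
  obtain ⟨C, hC, hest⟩ :=
    exists_neg_le_mul_norm_sub_rpow ha hη hA hα hβ hγ hγ' hΩ hΩb hΩtype hu
  exact ⟨C, hC, fun x hx y hy ↦ abs_sub_le_mul_norm_sub_rpow_of_frontier hC.le hΩb huconv
    hu.continuousOn hu.eq_zero hest hx hy⟩

lemma isMongeAmpereSupersolution_of_isClassicalSolution {n : ℕ}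
    {Ω : Set (EuclideanSpace ℝ (Fin n))} {F : EuclideanSpace ℝ (Fin n) → ℝ → ℝ}
    {u : EuclideanSpace ℝ (Fin n) → ℝ} {A α β : ℝ} (hF : SatisfiesFCond Ω F A α β)
    (hu : IsClassicalSolution Ω F u) : IsMongeAmpereSupersolution Ω A α β u := by
  obtain ⟨hcont, -, hC2, -, hbd, hdet⟩ := hu
  exact ⟨hcont, hC2, hbd, fun x hx hneg ↦ (hdet x hx).trans_le (hF.2.2 x hx (u x) hneg).2⟩

/-- Theorem 1.2: on an `(a,η)` type domain with `a > 2`, every classical solution is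
`γ₂`-Hölder continuous on the closure of `Ω`. -/
theorem global_holder_regularity_aEta_domain
    (n : ℕ) (hn : 2 ≤ n) (a η A α β γ₂ : ℝ) (ha : 2 < a) (hη : 0 < η)
    (hA : 0 < A) (hα : 0 ≤ α) (hβ : (n : ℝ) + 1 ≤ β)
    (hγ₂ : (β < α + 2 * n - 1 - (2 * n - 2) / a ∧
        γ₂ = (β - n + 1) / (n + α) + (2 * n - 2) / (a * (n + α))) ∨
      (α + 2 * n - 1 - (2 * n - 2) / a ≤ β ∧ γ₂ ∈ Set.Ioo (0 : ℝ) 1))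
    (Ω : Set (EuclideanSpace ℝ (Fin n))) (F : EuclideanSpace ℝ (Fin n) → ℝ → ℝ)
    (u : EuclideanSpace ℝ (Fin n) → ℝ)
    (hΩopen : IsOpen Ω) (hΩconv : Convex ℝ Ω)
    (hΩbdd : Bornology.IsBounded Ω) (hΩne : Ω.Nonempty)
    (hΩtype : IsATypeDomain (by omega) Ω a η)
    (hF : SatisfiesFCond Ω F A α β)
    (hu : IsClassicalSolution Ω F u) :
    ∃ C : ℝ, 0 < C ∧
      ∀ x ∈ closure Ω, ∀ y ∈ closure Ω, |u x - u y| ≤ C * ‖x - y‖ ^ γ₂ := by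
  obtain ⟨hγ, hγ'⟩ := exponent_mem_Ioo_and_mul_le (by lia) (by linarith) hα hβ hγ₂
  exact global_holder_regularity_aEta_domain_general (by linarith) hη hA.le hα hβ hγ hγ' hΩopen
    hΩbdd hΩtype hu.2.1 (isMongeAmpereSupersolution_of_isClassicalSolution hF hu)
end

section
/- Let Ω ⊂ ℝⁿ (n ≥ 2) be a bounded open convex domain satisfying the exterior sphere condition with radius R > 0. Suppose F : Ω × (−∞,0) → ℝ is continuous and non-decreasing in its second argument, and there are constants A > 0, α ≥ 0, β ≥ n+1 with β < α + n such that 0 < F(x,t) ≤ A·d_x^{β−n−1}·|t|^{−α} for all x ∈ Ω and t < 0. If u is a classical solution of det D²u = F(x,u) in Ω with u = 0 on ∂Ω, then there is a constant C depending only on n, α, β, A, R and diam Ω such that |u(y)| ≤ C·d_y^{β/(n+α)} for every y ∈ Ω. -/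
/-- `Ω` satisfies the exterior sphere condition with radius `R`: through every boundary
point there is a closed ball of radius `R` containing `Ω`. -/
def ExteriorSphereCond {n : ℕ} (Ω : Set (EuclideanSpace ℝ (Fin n))) (R : ℝ) : Prop :=
  ∀ x₀ ∈ frontier Ω, ∃ y₀ : EuclideanSpace ℝ (Fin n),
    Ω ⊆ Metric.closedBall y₀ R ∧ x₀ ∈ Metric.sphere y₀ R

/-!
Let `γ = β / (n + α)`, which lies in `(0, 1)`, and let `Ω` lie in the ball of radius `R` about `c`
that touches `∂Ω` at a point nearest to `y`. On this ball put `ρ x = R² - |x - c|²` and compare `u`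
with the barrier `w = -M ρ ^ γ`. Its Hessian is
`2 M γ ρ ^ (γ - 1) (I + 2 (1 - γ) ρ⁻¹ (x - c) ⊗ (x - c))`, so that `det D²w` is at least a positive
constant times `M ^ n ρ ^ (n (γ - 1) - 1)`. Since `R d_x ≤ ρ x` on `Ω`, wherever `u < w` the right
hand side of the equation is at most `A R ^ (-(β - n - 1)) ρ ^ (β - n - 1 - γ α)` once `M ≥ 1`. The
choice of `γ` makes the two exponents of `ρ` equal, so for `M` large `det D²u < det D²w` wherever
`u < w`. At a negative interior minimum of `u - w`, however, `D²u ≥ D²w ≥ 0` and hence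
`det D²u ≥ det D²w`. Therefore `w ≤ u`, and `ρ y ≤ 2 R d_y` turns this into the bound at `y`.
-/

open scoped Topology Matrix MatrixOrder ComplexOrder

section Determinant

variable {ι 𝕜 : Type*} [Fintype ι] [DecidableEq ι] [RCLike 𝕜]

lemma one_le_det_one_add_of_posSemidef_s5 {P : Matrix ι ι 𝕜} (hP : P.PosSemidef) :
    1 ≤ (1 + P).det := by
  have hdet : (1 + P).det = ∏ i, (1 + (hP.1.eigenvalues i : 𝕜)) := by
    conv_lhs => rw [hP.1.spectral_theorem, ← map_one (Unitary.conjStarAlgAut 𝕜 _ _), ← map_add,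
      Unitary.conjStarAlgAut_apply, Matrix.det_mul_right_comm]
    simp [← Matrix.diagonal_one, Matrix.diagonal_add]
  rw [hdet]
  exact_mod_cast Finset.one_le_prod fun i _ ↦
    le_add_of_nonneg_right (hP.eigenvalues_nonneg i)

lemma det_le_det_of_posSemidef_sub_s5 {B H : Matrix ι ι 𝕜} (hB : B.PosSemidef)
    (hBH : (H - B).PosSemidef) : B.det ≤ H.det := by
  have hH : H.PosSemidef := by simpa using hBH.add hB
  rcases eq_or_ne B.det 0 with hB0 | hB0
  · simpa [hB0] using hH.det_nonneg
  obtain ⟨C, rfl⟩ := CStarAlgebra.nonneg_iff_eq_star_mul_self.mp hB.nonneg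
  have hC : IsUnit C.det := isUnit_iff_ne_zero.2 (right_ne_zero_of_mul (Matrix.det_mul _ C ▸ hB0))
  set P := star C⁻¹ * (H - star C * C) * C⁻¹ with hPdef
  have hP : P.PosSemidef := hBH.conjTranspose_mul_mul_same C⁻¹
  have hCinv : C⁻¹ * C = 1 := Matrix.nonsing_inv_mul C hC
  have hHP : H = star C * (1 + P) * C := by
    have hstar : star C * star C⁻¹ = 1 := by rw [← star_mul, hCinv, star_one]
    have hcancel : star C * P * C = H - star C * C := by
      simp only [hPdef, ← mul_assoc, hstar, one_mul]
      rw [mul_assoc, hCinv, mul_one]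
    rw [mul_add, add_mul, hcancel, mul_one, add_sub_cancel]
  calc (star C * C).det = (star C * C).det * 1 := (mul_one _).symm
    _ ≤ (star C * C).det * (1 + P).det :=
      mul_le_mul_of_nonneg_left (one_le_det_one_add_of_posSemidef_s5 hP) hB.det_nonneg
    _ = H.det := by rw [hHP]; simp only [Matrix.det_mul]; ring

end Determinant

section SecondDerivativeTest

lemma deriv_deriv_nonneg_of_isLocalMin_s5 {f : ℝ → ℝ} {a : ℝ} (hmin : IsLocalMin f a)
    (hf : ContinuousAt f a) : 0 ≤ deriv (deriv f) a := by
  by_contra! hneg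
  have hmax : IsLocalMax f a := isLocalMax_of_deriv_deriv_neg hneg hmin.deriv_eq_zero hf
  have hconst : f =ᶠ[𝓝 a] fun _ ↦ f a := by
    filter_upwards [hmin, hmax] with t hle hge using le_antisymm hge hle
  have hzero : deriv (deriv f) a = 0 := by
    rw [hconst.deriv.deriv_eq]
    simp
  exact hneg.ne hzero

lemma fderiv_fderiv_self_nonneg_of_isLocalMin {E : Type*} [NormedAddCommGroup E]
    [NormedSpace ℝ E] {f : E → ℝ} {a : E} (hmin : IsLocalMin f a) (hf : ContDiffAt ℝ 2 f a)
    (v : E) : 0 ≤ fderiv ℝ (fderiv ℝ f) a v v := by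
  let line : ℝ → E := fun t ↦ a + t • v
  have hline0 : line 0 = a := by simp [line]
  have hline : ∀ t, HasDerivAt line v t := fun t ↦ by
    simpa [line] using ((hasDerivAt_id t).smul_const v).const_add a
  have hline_tendsto : Filter.Tendsto line (𝓝 0) (𝓝 a) := hline0 ▸ (hline 0).continuousAt
  rw [← hline0] at hmin
  have hderiv : deriv (f ∘ line) =ᶠ[𝓝 0] fun t ↦ fderiv ℝ f (line t) v := by
    have hdiff := (hf.eventually (by simp)).mono fun x hx ↦ hx.differentiableAt two_ne_zero
    filter_upwards [hline_tendsto.eventually hdiff] with t ht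
    exact (ht.hasFDerivAt.comp_hasDerivAt t (hline t)).deriv
  have hderiv2 : HasDerivAt (fun t ↦ fderiv ℝ f (line t) v) (fderiv ℝ (fderiv ℝ f) a v v) 0 := by
    have hfderiv : DifferentiableAt ℝ (fderiv ℝ f) a :=
      (hf.fderiv_right (m := 1) le_rfl).differentiableAt one_ne_zero
    have hcomp := hfderiv.hasFDerivAt.comp_hasDerivAt_of_eq 0 (hline 0) hline0.symm
    simpa using hcomp.clm_apply (hasDerivAt_const 0 v)
  rw [← hderiv2.deriv, ← hderiv.deriv_eq]
  refine deriv_deriv_nonneg_of_isLocalMin_s5 (hmin.comp_continuous (hline 0).continuousAt) ?_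
  exact ContinuousAt.comp_of_eq hf.continuousAt (hline 0).continuousAt hline0

end SecondDerivativeTest

section HessianComparison

variable {n : ℕ} {u w : EuclideanSpace ℝ (Fin n) → ℝ} {x : EuclideanSpace ℝ (Fin n)}

/-- The Hessian matrix of `u` at `x`, whose determinant is `hessianDet u x`. -/
noncomputable def hessianMatrix (u : EuclideanSpace ℝ (Fin n) → ℝ)
    (x : EuclideanSpace ℝ (Fin n)) : Matrix (Fin n) (Fin n) ℝ :=
  Matrix.of fun i j ↦
    fderiv ℝ (fderiv ℝ u) x (EuclideanSpace.single i 1) (EuclideanSpace.single j 1)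

lemma hessianDet_eq_det_hessianMatrix (u : EuclideanSpace ℝ (Fin n) → ℝ)
    (x : EuclideanSpace ℝ (Fin n)) : hessianDet u x = (hessianMatrix u x).det := by
  simp [hessianDet, hessianMatrix, iteratedFDeriv_two_apply]

lemma isHermitian_hessianMatrix (hu : ContDiffAt ℝ 2 u x) : (hessianMatrix u x).IsHermitian :=
  Matrix.IsHermitian.ext fun _ _ ↦ hu.isSymmSndFDerivAt (by simp) _ _

lemma dotProduct_hessianMatrix_mulVec (u : EuclideanSpace ℝ (Fin n) → ℝ)
    (x : EuclideanSpace ℝ (Fin n)) (v : Fin n → ℝ) :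
    v ⬝ᵥ hessianMatrix u x *ᵥ v =
      fderiv ℝ (fderiv ℝ u) x (WithLp.toLp 2 v) (WithLp.toLp 2 v) := by
  have hv : WithLp.toLp 2 v = ∑ i, v i • EuclideanSpace.single i (1 : ℝ) := by
    ext j
    simp [Pi.single_apply]
  simp only [hv, hessianMatrix, map_sum, map_smul, sum_apply, smul_apply,
    dotProduct, Matrix.mulVec, Matrix.of_apply, smul_eq_mul, Finset.mul_sum]
  exact Finset.sum_comm.trans
    (Finset.sum_congr rfl fun i _ ↦ Finset.sum_congr rfl fun j _ ↦ by ring)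

lemma hessianMatrix_sub (hu : ContDiffAt ℝ 2 u x) (hw : ContDiffAt ℝ 2 w x) :
    hessianMatrix (u - w) x = hessianMatrix u x - hessianMatrix w x := by
  ext i j
  simpa [iteratedFDeriv_two_apply, hessianMatrix] using
    DFunLike.congr_fun (iteratedFDeriv_sub_apply hu hw)
      ![EuclideanSpace.single i 1, EuclideanSpace.single j 1]

lemma posSemidef_hessianMatrix_of_isLocalMin (hmin : IsLocalMin u x) (hu : ContDiffAt ℝ 2 u x) :
    (hessianMatrix u x).PosSemidef :=
  .of_dotProduct_mulVec_nonneg (isHermitian_hessianMatrix hu) fun v ↦ by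
    rw [star_trivial, dotProduct_hessianMatrix_mulVec]
    exact fderiv_fderiv_self_nonneg_of_isLocalMin hmin hu _

lemma hessianDet_le_hessianDet_of_isLocalMin_sub (hmin : IsLocalMin (u - w) x)
    (hu : ContDiffAt ℝ 2 u x) (hw : ContDiffAt ℝ 2 w x) (hwx : (hessianMatrix w x).PosSemidef) :
    hessianDet w x ≤ hessianDet u x := by
  rw [hessianDet_eq_det_hessianMatrix, hessianDet_eq_det_hessianMatrix]
  refine det_le_det_of_posSemidef_sub_s5 hwx ?_
  rw [← hessianMatrix_sub hu hw]
  exact posSemidef_hessianMatrix_of_isLocalMin hmin (hu.sub hw)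

lemma nonneg_on_of_forall_neg_not_isLocalMin {X : Type*} [TopologicalSpace X] {Ω : Set X}
    {f : X → ℝ} (hΩ : IsOpen Ω) (hcompact : IsCompact (closure Ω))
    (hf : ContinuousOn f (closure Ω)) (hfrontier : ∀ x ∈ frontier Ω, 0 ≤ f x)
    (hmin : ∀ x ∈ Ω, f x < 0 → ¬ IsLocalMin f x) : ∀ x ∈ Ω, 0 ≤ f x := by
  intro x hx
  obtain ⟨z, hz, hzmin⟩ := hcompact.exists_isMinOn ⟨x, subset_closure hx⟩ hf
  refine le_trans ?_ (hzmin (subset_closure hx))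
  by_cases hzΩ : z ∈ Ω
  · by_contra! hneg
    exact hmin z hzΩ hneg ((hzmin.on_subset subset_closure).isLocalMin (hΩ.mem_nhds hzΩ))
  · exact hfrontier z (hΩ.frontier_eq ▸ ⟨hz, hzΩ⟩)

lemma le_on_of_hessianDet_lt {Ω : Set (EuclideanSpace ℝ (Fin n))} (hΩ : IsOpen Ω)
    (hbounded : Bornology.IsBounded Ω) (hu : ContinuousOn u (closure Ω))
    (hu2 : ContDiffOn ℝ 2 u Ω) (hw : ContinuousOn w (closure Ω)) (hw2 : ContDiffOn ℝ 2 w Ω)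
    (hwpos : ∀ x ∈ Ω, (hessianMatrix w x).PosSemidef) (hfrontier : ∀ x ∈ frontier Ω, w x ≤ u x)
    (hlt : ∀ x ∈ Ω, u x < w x → hessianDet u x < hessianDet w x) : ∀ x ∈ Ω, w x ≤ u x := by
  intro x hx
  refine sub_nonneg.1 <| nonneg_on_of_forall_neg_not_isLocalMin (f := u - w) hΩ
    hbounded.isCompact_closure (hu.sub hw) (fun z hz ↦ sub_nonneg.2 (hfrontier z hz)) ?_ x hx
  intro z hz hneg hmin
  have hzΩ := hΩ.mem_nhds hz
  exact (hlt z hz (sub_neg.1 hneg)).not_ge <| hessianDet_le_hessianDet_of_isLocalMin_sub hmin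
    (hu2.contDiffAt hzΩ) (hw2.contDiffAt hzΩ) (hwpos z hz)

end HessianComparison

section Barrier

/-- The barrier `-M (R² - |x - c|²) ^ γ` on the ball of radius `R` about `c`: for `0 < γ < 1` it
is convex in the ball, vanishes on the sphere and decays like the `γ`-th power of the distance to
it. Outside the ball its values are those of `Real.rpow` at a negative base. -/
noncomputable def ballBarrier {E : Type*} [NormedAddCommGroup E] (c : E) (R M γ : ℝ) (x : E) : ℝ :=
  -M * (R ^ 2 - ‖x - c‖ ^ 2) ^ γ

lemma continuous_ballBarrier {E : Type*} [NormedAddCommGroup E] (c : E) (R M : ℝ) {γ : ℝ}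
    (hγ : 0 ≤ γ) : Continuous (ballBarrier c R M γ) :=
  continuous_const.mul (Continuous.rpow_const (by fun_prop) fun _ ↦ Or.inr hγ)

section Calculus

variable {E : Type*} [NormedAddCommGroup E] [InnerProductSpace ℝ E] {c x : E} {R γ : ℝ}

lemma contDiffAt_ballBarrier (M γ : ℝ) (hx : 0 < R ^ 2 - ‖x - c‖ ^ 2) {k : WithTop ℕ∞} :
    ContDiffAt ℝ k (ballBarrier c R M γ) x :=
  contDiffAt_const.mul <| ContDiffAt.rpow_const_of_ne
    (contDiffAt_const.sub ((contDiffAt_id.sub contDiffAt_const).norm_sq ℝ)) hx.ne'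

lemma hasFDerivAt_rpow_sq_sub_norm_sq (γ : ℝ) (hx : 0 < R ^ 2 - ‖x - c‖ ^ 2) :
    HasFDerivAt (fun y ↦ (R ^ 2 - ‖y - c‖ ^ 2) ^ γ)
      ((-2 * γ * (R ^ 2 - ‖x - c‖ ^ 2) ^ (γ - 1)) • innerSL ℝ (x - c)) x := by
  have hnorm := ((hasFDerivAt_id x).sub_const c).norm_sq.const_sub (R ^ 2)
  refine (hnorm.rpow_const (Or.inl hx.ne')).congr_fderiv ?_
  ext v
  simp only [id_eq, map_sub, ContinuousLinearMap.comp_id, smul_neg, neg_apply, smul_apply,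
    sub_apply, coe_innerSL_apply, nsmul_eq_mul, Nat.cast_ofNat, smul_eq_mul, neg_mul, neg_smul,
    neg_inj]
  ring

lemma fderiv_ballBarrier (M γ : ℝ) (hx : 0 < R ^ 2 - ‖x - c‖ ^ 2) :
    fderiv ℝ (ballBarrier c R M γ) x =
      (2 * M * γ * (R ^ 2 - ‖x - c‖ ^ 2) ^ (γ - 1)) • innerSL ℝ (x - c) := by
  refine (((hasFDerivAt_rpow_sq_sub_norm_sq γ hx).const_mul (-M)).congr_fderiv ?_).fderiv
  rw [smul_smul]
  ring_nf

lemma fderiv_fderiv_ballBarrier_apply_apply (M γ : ℝ) (hx : 0 < R ^ 2 - ‖x - c‖ ^ 2) (v w : E) :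
    fderiv ℝ (fderiv ℝ (ballBarrier c R M γ)) x v w =
      2 * M * γ * (R ^ 2 - ‖x - c‖ ^ 2) ^ (γ - 1) * (inner ℝ v w +
        2 * (1 - γ) / (R ^ 2 - ‖x - c‖ ^ 2) * (inner ℝ (x - c) v * inner ℝ (x - c) w)) := by
  have hfderiv : fderiv ℝ (ballBarrier c R M γ) =ᶠ[𝓝 x]
      fun y ↦ (2 * M * γ * (R ^ 2 - ‖y - c‖ ^ 2) ^ (γ - 1)) • innerSL ℝ (y - c) := by
    have hcont : Continuous fun y ↦ R ^ 2 - ‖y - c‖ ^ 2 := by fun_prop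
    filter_upwards [hcont.continuousAt.eventually_const_lt hx] with y hy
    exact fderiv_ballBarrier M γ hy
  have hcoeff := (hasFDerivAt_rpow_sq_sub_norm_sq (γ - 1) hx).const_mul (2 * M * γ)
  have hinner : HasFDerivAt (fun y ↦ innerSL ℝ (y - c)) (innerSL ℝ) x :=
    (innerSL ℝ).hasFDerivAt.comp x ((hasFDerivAt_id x).sub_const c)
  have hfderiv2 := (hcoeff.smul hinner).congr_of_eventuallyEq hfderiv
  rw [hfderiv2.fderiv]
  change 2 * M * γ * (R ^ 2 - ‖x - c‖ ^ 2) ^ (γ - 1) * inner ℝ v w +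
    2 * M * γ * (-2 * (γ - 1) * (R ^ 2 - ‖x - c‖ ^ 2) ^ (γ - 1 - 1) * inner ℝ (x - c) v) *
      inner ℝ (x - c) w = _
  rw [Real.rpow_sub_one hx.ne' (γ - 1)]
  field_simp
  ring

end Calculus

section Hessian

variable {n : ℕ} {c x : EuclideanSpace ℝ (Fin n)} {R M γ : ℝ}

lemma hessianMatrix_ballBarrier (M γ : ℝ) (hx : 0 < R ^ 2 - ‖x - c‖ ^ 2) :
    hessianMatrix (ballBarrier c R M γ) x =
      (2 * M * γ * (R ^ 2 - ‖x - c‖ ^ 2) ^ (γ - 1)) •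
        (1 + (2 * (1 - γ) / (R ^ 2 - ‖x - c‖ ^ 2)) • Matrix.vecMulVec ⇑(x - c) ⇑(x - c)) := by
  ext i j
  simp [hessianMatrix, fderiv_fderiv_ballBarrier_apply_apply M γ hx, Matrix.vecMulVec_apply,
    EuclideanSpace.inner_single_right, Matrix.one_apply, eq_comm]

lemma posSemidef_hessianMatrix_ballBarrier (hM : 0 ≤ M) (hγ : 0 ≤ γ) (hγ1 : γ ≤ 1)
    (hx : 0 < R ^ 2 - ‖x - c‖ ^ 2) : (hessianMatrix (ballBarrier c R M γ) x).PosSemidef := by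
  rw [hessianMatrix_ballBarrier M γ hx]
  refine (Matrix.PosSemidef.one.add (Matrix.PosSemidef.smul ?_ ?_)).smul ?_
  · exact Matrix.posSemidef_vecMulVec_self_star ⇑(x - c)
  · exact div_nonneg (mul_nonneg zero_le_two (sub_nonneg.2 hγ1)) hx.le
  · positivity

lemma hessianDet_ballBarrier (M γ : ℝ) (hx : 0 < R ^ 2 - ‖x - c‖ ^ 2) :
    hessianDet (ballBarrier c R M γ) x =
      (2 * M * γ) ^ n * (R ^ 2 - ‖x - c‖ ^ 2) ^ (n * (γ - 1) - 1) *
        (R ^ 2 - ‖x - c‖ ^ 2 + 2 * (1 - γ) * ‖x - c‖ ^ 2) := by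
  set ρ := R ^ 2 - ‖x - c‖ ^ 2 with hρ
  have hdot : ⇑(x - c) ⬝ᵥ ⇑(x - c) = ‖x - c‖ ^ 2 := by
    rw [EuclideanSpace.real_norm_sq_eq]
    simp [dotProduct, sq]
  have hpow : ρ ^ (n * (γ - 1) - 1) = (ρ ^ (γ - 1)) ^ n / ρ := by
    rw [Real.rpow_sub_one hx.ne', mul_comm, Real.rpow_mul_natCast hx.le]
  rw [hessianDet_eq_det_hessianMatrix, hessianMatrix_ballBarrier M γ hx, Matrix.det_smul,
    ← Matrix.smul_vecMulVec, Matrix.vecMulVec_eq Unit,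
    Matrix.det_one_add_replicateCol_mul_replicateRow, dotProduct_smul, hdot, smul_eq_mul,
    Fintype.card_fin, mul_pow, hpow, ← hρ]
  field_simp

lemma le_hessianDet_ballBarrier (hM : 0 ≤ M) (hγ : 0 ≤ γ) (hx : 0 < R ^ 2 - ‖x - c‖ ^ 2) :
    (2 * M * γ) ^ n * (R ^ 2 - ‖x - c‖ ^ 2) ^ (n * (γ - 1) - 1) * (min 1 (2 * (1 - γ)) * R ^ 2) ≤
      hessianDet (ballBarrier c R M γ) x := by
  rw [hessianDet_ballBarrier M γ hx]
  gcongr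
  calc min 1 (2 * (1 - γ)) * R ^ 2
      = min 1 (2 * (1 - γ)) * (R ^ 2 - ‖x - c‖ ^ 2) + min 1 (2 * (1 - γ)) * ‖x - c‖ ^ 2 := by ring
    _ ≤ 1 * (R ^ 2 - ‖x - c‖ ^ 2) + 2 * (1 - γ) * ‖x - c‖ ^ 2 := by
      gcongr
      exacts [min_le_left _ _, min_le_right _ _]
    _ = R ^ 2 - ‖x - c‖ ^ 2 + 2 * (1 - γ) * ‖x - c‖ ^ 2 := by rw [one_mul]

end Hessian

end Barrier

section DistanceToFrontier

variable {E : Type*} [NormedAddCommGroup E] [NormedSpace ℝ E] {Ω : Set E} {c x y : E} {R : ℝ}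

lemma infDist_frontier_le_dist_of_notMem [FiniteDimensional ℝ E] (hx : x ∈ Ω) (hy : y ∉ Ω) :
    Metric.infDist x (frontier Ω) ≤ dist x y := by
  obtain ⟨z, hz, hdist⟩ :=
    exists_mem_frontier_infDist_compl_eq_dist hx (Set.ne_univ_iff_exists_notMem Ω |>.2 ⟨y, hy⟩)
  calc Metric.infDist x (frontier Ω) ≤ dist x z := Metric.infDist_le_dist_of_mem hz
    _ = Metric.infDist x Ωᶜ := hdist.symm
    _ ≤ dist x y := Metric.infDist_le_dist_of_mem hy

lemma exists_dist_eq_add_dist [Nontrivial E] (x c : E) {s : ℝ} (hs : 0 ≤ s) :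
    ∃ y, dist x y = s ∧ dist y c = s + dist x c := by
  obtain ⟨v, hv, hray⟩ : ∃ v : E, ‖v‖ = s ∧ SameRay ℝ v (x - c) := by
    rcases eq_or_ne (x - c) 0 with hxc | hxc
    · obtain ⟨v, hv⟩ := exists_norm_eq E hs
      exact ⟨v, hv, hxc ▸ SameRay.zero_right v⟩
    · refine ⟨(s / ‖x - c‖) • (x - c), ?_, SameRay.sameRay_nonneg_smul_left _ (by positivity)⟩
      rw [norm_smul, Real.norm_of_nonneg (by positivity),
        div_mul_cancel₀ _ (norm_ne_zero_iff.2 hxc)]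
  refine ⟨v + x, by simp [dist_eq_norm, hv], ?_⟩
  rw [dist_eq_norm, add_sub_assoc, hray.norm_add, hv, dist_eq_norm]

lemma infDist_frontier_add_dist_le [FiniteDimensional ℝ E] [Nontrivial E]
    (hΩ : Ω ⊆ Metric.closedBall c R) (hx : x ∈ Ω) :
    Metric.infDist x (frontier Ω) + dist x c ≤ R := by
  by_contra! hlt
  obtain ⟨s, hRs, hsd⟩ := exists_between (sub_lt_iff_lt_add.2 hlt)
  have hs : 0 ≤ s := (sub_nonneg.2 (Metric.mem_closedBall.1 (hΩ hx))).trans hRs.le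
  obtain ⟨y, hxy, hyc⟩ := exists_dist_eq_add_dist x c hs
  have hy : y ∉ Ω := fun hy ↦ by linarith [Metric.mem_closedBall.1 (hΩ hy)]
  linarith [infDist_frontier_le_dist_of_notMem hx hy]

lemma mul_infDist_frontier_le_sq_sub_norm_sq [FiniteDimensional ℝ E] [Nontrivial E]
    (hΩ : Ω ⊆ Metric.closedBall c R) (hx : x ∈ Ω) :
    R * Metric.infDist x (frontier Ω) ≤ R ^ 2 - ‖x - c‖ ^ 2 := by
  have hadd := infDist_frontier_add_dist_le hΩ hx
  rw [dist_eq_norm] at hadd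
  nlinarith [norm_nonneg (x - c), Metric.infDist_nonneg (x := x) (s := frontier Ω)]

lemma sq_sub_norm_sq_le_mul_dist {F : Type*} [SeminormedAddCommGroup F] {c x y : F} {R : ℝ}
    (hx : x ∈ Metric.closedBall c R) (hy : y ∈ Metric.sphere c R) :
    R ^ 2 - ‖x - c‖ ^ 2 ≤ 2 * R * dist x y := by
  have htriangle : R ≤ dist x y + ‖x - c‖ := by
    simpa [dist_comm y x, dist_eq_norm x c, Metric.mem_sphere.1 hy] using dist_triangle y x c
  have hnorm : ‖x - c‖ ≤ R := by simpa [dist_eq_norm] using hx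
  nlinarith [norm_nonneg (x - c), dist_nonneg (x := x) (y := y)]

lemma infDist_frontier_pos_of_isOpen {X : Type*} [PseudoMetricSpace X] {Ω : Set X} {x : X}
    (hΩ : IsOpen Ω) (hfrontier : (frontier Ω).Nonempty) (hx : x ∈ Ω) :
    0 < Metric.infDist x (frontier Ω) :=
  (isClosed_frontier.notMem_iff_infDist_pos hfrontier).1 fun hx' ↦
    Set.eq_empty_iff_forall_notMem.1 hΩ.inter_frontier_eq x ⟨hx, hx'⟩

lemma nonempty_frontier_of_isBounded [Nontrivial E] (hΩ : Bornology.IsBounded Ω)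
    (hne : Ω.Nonempty) : (frontier Ω).Nonempty := by
  refine nonempty_frontier_iff.2 ⟨hne, ?_⟩
  rintro rfl
  exact NormedSpace.unbounded_univ ℝ E hΩ

end DistanceToFrontier

section BoundaryDecay

lemma rpow_mul_rpow_neg_le {d R ρ δ γ U α : ℝ} (hd : 0 ≤ d) (hR : 0 < R) (hρ : 0 < ρ)
    (hδ : 0 ≤ δ) (hα : 0 ≤ α) (hdρ : R * d ≤ ρ) (hU : ρ ^ γ ≤ U) :
    d ^ δ * U ^ (-α) ≤ R ^ (-δ) * ρ ^ (δ - γ * α) := by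
  have hdδ : d ^ δ ≤ R ^ (-δ) * ρ ^ δ :=
    calc d ^ δ ≤ (R⁻¹ * ρ) ^ δ := by
          gcongr
          rwa [le_inv_mul_iff₀ hR]
      _ = R ^ (-δ) * ρ ^ δ := by
          rw [Real.mul_rpow (by positivity) hρ.le, Real.inv_rpow hR.le, Real.rpow_neg hR.le]
  have hUα : U ^ (-α) ≤ ρ ^ (-(γ * α)) :=
    calc U ^ (-α) ≤ (ρ ^ γ) ^ (-α) :=
          Real.rpow_le_rpow_of_nonpos (by positivity) hU (neg_nonpos.2 hα)
      _ = ρ ^ (-(γ * α)) := by rw [← Real.rpow_mul hρ.le, mul_neg]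
  have hU0 : 0 ≤ U := (Real.rpow_nonneg hρ.le γ).trans hU
  calc d ^ δ * U ^ (-α) ≤ R ^ (-δ) * ρ ^ δ * ρ ^ (-(γ * α)) := by gcongr
    _ = R ^ (-δ) * ρ ^ (δ - γ * α) := by rw [mul_assoc, ← Real.rpow_add hρ, sub_eq_add_neg]

variable {n : ℕ} {A α β γ M R : ℝ}

/-- `M` is large enough for `ballBarrier c R M γ` to be a strict subsolution of
`det D²u = A d ^ (β - n - 1) |u| ^ (-α)` in the ball of radius `R` about `c`, when
`γ (n + α) = β`. -/
def IsBarrierConstant (n : ℕ) (A β γ R M : ℝ) : Prop :=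
  1 ≤ M ∧ A * R ^ (-(β - n - 1)) < (2 * M * γ) ^ n * (min 1 (2 * (1 - γ)) * R ^ 2)

lemma exists_isBarrierConstant (hn : n ≠ 0) (A β : ℝ) (hR : 0 < R) (hγ : 0 < γ) (hγ1 : γ < 1) :
    ∃ M, IsBarrierConstant n A β γ R M := by
  have hmin : 0 < min 1 (2 * (1 - γ)) * R ^ 2 := by
    have := sub_pos.2 hγ1
    positivity
  have htop : Filter.Tendsto (fun M : ℝ ↦ (2 * M * γ) ^ n * (min 1 (2 * (1 - γ)) * R ^ 2))
      Filter.atTop Filter.atTop :=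
    ((Filter.tendsto_pow_atTop hn).comp <|
      (Filter.tendsto_id.const_mul_atTop two_pos).atTop_mul_const hγ).atTop_mul_const hmin
  exact ((Filter.eventually_ge_atTop 1).and (htop.eventually_gt_atTop _)).exists

lemma lt_hessianDet_ballBarrier {c x : EuclideanSpace ℝ (Fin n)} {d t : ℝ} (hA : 0 ≤ A)
    (hα : 0 ≤ α) (hβ : n + 1 ≤ β) (hR : 0 < R) (hγ : 0 ≤ γ) (hγβ : γ * (n + α) = β)
    (hM : IsBarrierConstant n A β γ R M) (hd : 0 ≤ d) (hx : 0 < R ^ 2 - ‖x - c‖ ^ 2)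
    (hdx : R * d ≤ R ^ 2 - ‖x - c‖ ^ 2) (ht : t ≤ ballBarrier c R M γ x) :
    A * d ^ (β - n - 1) * |t| ^ (-α) < hessianDet (ballBarrier c R M γ) x := by
  obtain ⟨hM1, hM⟩ := hM
  have ht' : (R ^ 2 - ‖x - c‖ ^ 2) ^ γ ≤ |t| :=
    calc (R ^ 2 - ‖x - c‖ ^ 2) ^ γ ≤ M * (R ^ 2 - ‖x - c‖ ^ 2) ^ γ :=
          le_mul_of_one_le_left (by positivity) hM1
      _ = -ballBarrier c R M γ x := by simp [ballBarrier]
      _ ≤ -t := neg_le_neg ht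
      _ ≤ |t| := neg_le_abs t
  have hδ : 0 ≤ β - n - 1 := by linarith
  have hexponent : β - n - 1 - γ * α = n * (γ - 1) - 1 := by linarith
  calc A * d ^ (β - n - 1) * |t| ^ (-α)
      = A * (d ^ (β - n - 1) * |t| ^ (-α)) := mul_assoc _ _ _
    _ ≤ A * (R ^ (-(β - n - 1)) * (R ^ 2 - ‖x - c‖ ^ 2) ^ (n * (γ - 1) - 1)) := by
      rw [← hexponent]
      exact mul_le_mul_of_nonneg_left (rpow_mul_rpow_neg_le hd hR hx hδ hα hdx ht') hA
    _ = A * R ^ (-(β - n - 1)) * (R ^ 2 - ‖x - c‖ ^ 2) ^ (n * (γ - 1) - 1) := by ring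
    _ < (2 * M * γ) ^ n * (min 1 (2 * (1 - γ)) * R ^ 2) *
          (R ^ 2 - ‖x - c‖ ^ 2) ^ (n * (γ - 1) - 1) := by gcongr
    _ = (2 * M * γ) ^ n * (R ^ 2 - ‖x - c‖ ^ 2) ^ (n * (γ - 1) - 1) *
          (min 1 (2 * (1 - γ)) * R ^ 2) := by ring
    _ ≤ hessianDet (ballBarrier c R M γ) x :=
      le_hessianDet_ballBarrier (zero_le_one.trans hM1) hγ hx

variable {Ω : Set (EuclideanSpace ℝ (Fin n))} {u : EuclideanSpace ℝ (Fin n) → ℝ}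

lemma ballBarrier_le_on [NeZero n] {c : EuclideanSpace ℝ (Fin n)} (hA : 0 ≤ A) (hα : 0 ≤ α)
    (hβ : n + 1 ≤ β) (hR : 0 < R) (hγ : 0 ≤ γ) (hγ1 : γ ≤ 1) (hγβ : γ * (n + α) = β)
    (hM : IsBarrierConstant n A β γ R M) (hΩ : IsOpen Ω) (hball : Ω ⊆ Metric.closedBall c R)
    (hu : ContinuousOn u (closure Ω)) (hu2 : ContDiffOn ℝ 2 u Ω)
    (hu0 : ∀ x ∈ frontier Ω, 0 ≤ u x)
    (hdet : ∀ x ∈ Ω, u x < 0 →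
      hessianDet u x ≤ A * Metric.infDist x (frontier Ω) ^ (β - n - 1) * |u x| ^ (-α)) :
    ∀ x ∈ Ω, ballBarrier c R M γ x ≤ u x := by
  have hM0 : 0 ≤ M := zero_le_one.trans hM.1
  have hbounded : Bornology.IsBounded Ω := Metric.isBounded_closedBall.subset hball
  have hnonpos : ∀ x ∈ closure Ω, ballBarrier c R M γ x ≤ 0 := fun x hx ↦ by
    have hxR : ‖x - c‖ ≤ R := by
      simpa [dist_eq_norm] using closure_minimal hball Metric.isClosed_closedBall hx
    have hbase : 0 ≤ R ^ 2 - ‖x - c‖ ^ 2 := sub_nonneg.2 (by gcongr)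
    simpa [ballBarrier] using mul_nonneg hM0 (Real.rpow_nonneg hbase γ)
  have hdist := fun x (hx : x ∈ Ω) ↦ mul_infDist_frontier_le_sq_sub_norm_sq hball hx
  have hpos : ∀ x ∈ Ω, 0 < R ^ 2 - ‖x - c‖ ^ 2 := fun x hx ↦
    (mul_pos hR (infDist_frontier_pos_of_isOpen hΩ
      (nonempty_frontier_of_isBounded hbounded ⟨x, hx⟩) hx)).trans_le (hdist x hx)
  refine le_on_of_hessianDet_lt hΩ hbounded hu hu2 (continuous_ballBarrier c R M hγ).continuousOn
    (fun x hx ↦ (contDiffAt_ballBarrier M γ (hpos x hx)).contDiffWithinAt)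
    (fun x hx ↦ posSemidef_hessianMatrix_ballBarrier hM0 hγ hγ1 (hpos x hx))
    (fun x hx ↦ (hnonpos x (frontier_subset_closure hx)).trans (hu0 x hx)) fun x hx hlt ↦ ?_
  exact (hdet x hx (hlt.trans_le (hnonpos x (subset_closure hx)))).trans_lt <|
    lt_hessianDet_ballBarrier hA hα hβ hR hγ hγβ hM Metric.infDist_nonneg (hpos x hx)
      (hdist x hx) hlt.le

theorem pointwise_distance_bound_exterior_sphere_general [NeZero n] (hA : 0 ≤ A) (hR : 0 < R)
    (hβ : n + 1 ≤ β) (hβ' : β < α + n) :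
    ∃ C : ℝ, 0 < C ∧
      ∀ (Ω : Set (EuclideanSpace ℝ (Fin n))) (u : EuclideanSpace ℝ (Fin n) → ℝ),
        IsOpen Ω → Bornology.IsBounded Ω → ExteriorSphereCond Ω R →
        ContinuousOn u (closure Ω) → ContDiffOn ℝ 2 u Ω → (∀ x ∈ frontier Ω, 0 ≤ u x) →
        (∀ x ∈ Ω, u x < 0 →
          hessianDet u x ≤ A * Metric.infDist x (frontier Ω) ^ (β - n - 1) * |u x| ^ (-α)) →
        ∀ y ∈ Ω, -u y ≤ C * Metric.infDist y (frontier Ω) ^ (β / (n + α)) := by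
  have hα : 0 ≤ α := by linarith
  have hn : (0 : ℝ) < n := mod_cast NeZero.pos n
  have hnα : 0 < n + α := by positivity
  set γ := β / (n + α)
  have hγ : 0 < γ := div_pos (by linarith) hnα
  have hγ1 : γ < 1 := (div_lt_one hnα).2 (by linarith)
  obtain ⟨M, hM⟩ := exists_isBarrierConstant (NeZero.ne n) A β hR hγ hγ1
  have hM0 : 0 < M := zero_lt_one.trans_le hM.1
  refine ⟨M * (2 * R) ^ γ, by positivity, ?_⟩
  intro Ω u hΩ hbounded hsphere hu hu2 hu0 hdet y hy
  obtain ⟨x₀, hx₀, hdist⟩ :=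
    isClosed_frontier.exists_infDist_eq_dist (nonempty_frontier_of_isBounded hbounded ⟨y, hy⟩) y
  obtain ⟨c, hball, hx₀c⟩ := hsphere x₀ hx₀
  have hbase : 0 ≤ R ^ 2 - ‖y - c‖ ^ 2 :=
    (mul_nonneg hR.le Metric.infDist_nonneg).trans (mul_infDist_frontier_le_sq_sub_norm_sq hball hy)
  calc -u y ≤ -ballBarrier c R M γ y :=
        neg_le_neg <| ballBarrier_le_on hA hα hβ hR hγ.le hγ1.le (div_mul_cancel₀ β hnα.ne')
          hM hΩ hball hu hu2 hu0 hdet y hy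
    _ = M * (R ^ 2 - ‖y - c‖ ^ 2) ^ γ := by simp [ballBarrier]
    _ ≤ M * (2 * R * dist y x₀) ^ γ := by
      gcongr
      exact sq_sub_norm_sq_le_mul_dist (hball hy) hx₀c
    _ = M * (2 * R) ^ γ * Metric.infDist y (frontier Ω) ^ γ := by
      rw [hdist, Real.mul_rpow (by positivity) dist_nonneg, mul_assoc]

end BoundaryDecay

/-- Theorem 1.3 (i), pointwise form: on a domain satisfying the exterior sphere condition,
`|u(y)| ≤ C d_y^{β/(n+α)}` with `C` depending only on `n, α, β, A, R` and `diam Ω`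
(through the bound `D`). -/
theorem pointwise_distance_bound_exterior_sphere
    (n : ℕ) (hn : 2 ≤ n) (A α β R D : ℝ) (hA : 0 < A) (hα : 0 ≤ α) (hR : 0 < R)
    (hβ : (n : ℝ) + 1 ≤ β) (hβ' : β < α + n) :
    ∃ C : ℝ, 0 < C ∧
      ∀ (Ω : Set (EuclideanSpace ℝ (Fin n))) (F : EuclideanSpace ℝ (Fin n) → ℝ → ℝ)
        (u : EuclideanSpace ℝ (Fin n) → ℝ),
        IsOpen Ω → Convex ℝ Ω → Bornology.IsBounded Ω → Ω.Nonempty →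
        Metric.diam Ω ≤ D →
        ExteriorSphereCond Ω R →
        SatisfiesFCond Ω F A α β →
        IsClassicalSolution Ω F u →
        ∀ y ∈ Ω, |u y| ≤ C * Metric.infDist y (frontier Ω) ^ (β / (n + α)) := by
  have : NeZero n := ⟨by omega⟩
  obtain ⟨C, hC, hbound⟩ := pointwise_distance_bound_exterior_sphere_general hA.le hR hβ hβ'
  refine ⟨C, hC, fun Ω F u hΩ _ hbounded _ _ hsphere hF hu y hy ↦ ?_⟩
  obtain ⟨hcont, -, hu2, hneg, hu0, hdet⟩ := hu
  rw [abs_of_neg (hneg y hy)]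
  exact hbound Ω u hΩ hbounded hsphere hcont hu2 (fun x hx ↦ (hu0 x hx).ge)
    (fun x hx hux ↦ (hdet x hx).trans_le (hF.2.2 x hx (u x) hux).2) y hy
end
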